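/- arXiv:1211.0189 — 6 statements merged into one kernel-verified Lean document; each statement's English description precedes it below -/
import Mathlib

section
/- Let (f,g) be a Möbius pair of complex-valued arithmetic functions, not both identically zero. If the sum of 1/n over those natural numbers n in the support of g converges (i.e., supp(g) is thin), then the support of f possesses an asymptotic density, and this density is positive. -/
open Filter

open scoped Classical in
noncomputable def countIn (A : Set ℕ) (x : ℕ) : ℕ :=
  ((Finset.Icc 1 x).filter (fun n => n ∈ A)).card

/-- `A ⊆ ℕ` has asymptotic density `δ`. -/
def HasDensity (A : Set ℕ) (δ : ℝ) : Prop :=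
  Tendsto (fun x : ℕ => (countIn A x : ℝ) / x) atTop (nhds δ)

/-- `(f,g)` is a Möbius pair: `f(n) = ∑_{d ∣ n} g(d)` for all positive `n`. -/
def MobiusPair (f g : ℕ → ℂ) : Prop :=
  ∀ n : ℕ, 0 < n → f n = ∑ d ∈ n.divisors, g d

/-- `A` is thin: `∑_{a ∈ A} 1/a < ∞`. -/
def Thin (A : Set ℕ) : Prop := Summable (fun a : A => (1 : ℝ) / a)


theorem countIn_mono {A B : Set ℕ} (x : ℕ) (h : ∀ n ∈ A, 0 < n → n ∈ B) :
    countIn A x ≤ countIn B x := by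
  classical
  unfold countIn
  apply Finset.card_le_card
  intro n hn
  simp only [Finset.mem_filter, Finset.mem_Icc] at hn ⊢
  exact ⟨hn.1, h n hn.2 (by omega)⟩

theorem countIn_union_le (A B : Set ℕ) (x : ℕ) :
    countIn (A ∪ B) x ≤ countIn A x + countIn B x := by
  classical
  unfold countIn
  refine le_trans (Finset.card_le_card ?_) (Finset.card_union_le _ _)
  intro n hn
  simp only [Finset.mem_filter, Finset.mem_union, Set.mem_union] at hn ⊢
  tauto

theorem countIn_le (A : Set ℕ) (x : ℕ) : countIn A x ≤ x := by
  classical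
  unfold countIn
  refine le_trans (Finset.card_filter_le _ _) (by simp)

open scoped Classical in
theorem countIn_succ (A : Set ℕ) (x : ℕ) :
    countIn A (x + 1) = countIn A x + if x + 1 ∈ A then 1 else 0 := by
  unfold countIn
  rw [← Finset.insert_Icc_right_eq_Icc_add_one (by omega), Finset.filter_insert]
  split_ifs with h
  · rw [Finset.card_insert_of_notMem (by simp)]
  · rfl

theorem countIn_zero (A : Set ℕ) : countIn A 0 = 0 := by
  simp [countIn]

theorem countIn_add_period {A : Set ℕ} {M : ℕ} (hA : ∀ n, 0 < n → (n + M ∈ A ↔ n ∈ A)) (x : ℕ) :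
    countIn A (x + M) = countIn A x + countIn A M := by
  induction x with
  | zero => simp [countIn_zero]
  | succ k ih =>
    have : k + 1 + M = (k + M) + 1 := by ring
    rw [this, countIn_succ, countIn_succ, ih]
    have h := hA (k + 1) (by omega)
    rw [this] at h
    by_cases hk : k + 1 ∈ A
    · rw [if_pos hk, if_pos (h.2 hk)]; ring
    · rw [if_neg hk, if_neg (fun q => hk (h.1 q))]; ring

theorem countIn_periodic_bound {A : Set ℕ} {M : ℕ} (hM : 0 < M)
    (hA : ∀ n, 0 < n → (n + M ∈ A ↔ n ∈ A)) (x : ℕ) :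
    countIn A x * M ≤ x * countIn A M + M * M ∧ x * countIn A M ≤ countIn A x * M + M * M := by
  induction x using Nat.strong_induction_on with
  | _ x ih =>
    rcases lt_or_ge x M with h | h
    · have h1 := countIn_le A x
      have h2 := countIn_le A M
      constructor <;> nlinarith
    · obtain ⟨y, rfl⟩ := Nat.exists_eq_add_of_le' h
      have := ih y (by omega)
      rw [countIn_add_period hA]
      constructor <;> nlinarith

theorem hasDensity_periodic {A : Set ℕ} {M : ℕ} (hM : 0 < M)
    (hA : ∀ n, 0 < n → (n + M ∈ A ↔ n ∈ A)) : HasDensity A ((countIn A M : ℝ) / M) := by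
  unfold HasDensity
  rw [tendsto_iff_dist_tendsto_zero]
  refine squeeze_zero' (g := fun x : ℕ => (M : ℝ) / x) (Eventually.of_forall fun _ => dist_nonneg) ?_
    (tendsto_const_div_atTop_nhds_zero_nat _)
  filter_upwards [eventually_gt_atTop 0] with x hx
  obtain ⟨h1, h2⟩ := countIn_periodic_bound hM hA x
  have h1' : (countIn A x * M : ℝ) ≤ x * countIn A M + M * M := by exact_mod_cast h1
  have h2' : (x * countIn A M : ℝ) ≤ countIn A x * M + M * M := by exact_mod_cast h2
  have hx' : (0 : ℝ) < x := by exact_mod_cast hx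
  have hM' : (0 : ℝ) < M := by exact_mod_cast hM
  rw [Real.dist_eq, div_sub_div _ _ hx'.ne' hM'.ne', abs_div, abs_of_pos (mul_pos hx' hM'),
    div_le_div_iff₀ (mul_pos hx' hM') hx']
  have : |(countIn A x : ℝ) * M - x * countIn A M| ≤ M * M := by
    rw [abs_le]; constructor <;> linarith
  nlinarith

theorem thin_tail {S : Set ℕ} (h : Thin S) {ε : ℝ} (hε : 0 < ε) :
    ∃ T : ℕ, ∀ F : Finset ℕ, (∀ s ∈ F, s ∈ S ∧ T < s) → ∑ s ∈ F, (1 : ℝ) / s < ε := by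
  have h' : Summable (S.indicator (fun a : ℕ => (1 : ℝ) / a)) :=
    summable_subtype_iff_indicator.1 h
  obtain ⟨s, hs⟩ := h'.vanishing (Metric.ball_mem_nhds 0 hε)
  refine ⟨s.sup id, fun F hF => ?_⟩
  have hd : Disjoint F s := by
    rw [Finset.disjoint_left]
    intro a ha has
    have h1 := (hF a ha).2
    have h2 : id a ≤ s.sup id := Finset.le_sup has
    simp at h2
    omega
  have := hs F hd
  rw [Finset.sum_congr rfl (fun a ha => Set.indicator_of_mem (hF a ha).1 _)] at this
  rw [mem_ball_zero_iff, Real.norm_eq_abs] at this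
  exact lt_of_le_of_lt (le_abs_self _) this

def badSet (S : Set ℕ) (T : ℕ) : Set ℕ := {n | ∃ s ∈ S, T < s ∧ s ∣ n}

theorem countIn_dvd (s x : ℕ) : (countIn {n | s ∣ n} x : ℝ) ≤ x * (1 / s) := by
  classical
  have : countIn {n | s ∣ n} x = x / s := by
    unfold countIn
    rw [← Nat.Ioc_filter_dvd_card_eq_div]
    congr 1
    ext n
    simp only [Finset.mem_filter, Finset.mem_Icc, Finset.mem_Ioc, Set.mem_ofPred_eq]
    rfl
  rw [this]
  refine Nat.cast_div_le.trans (le_of_eq (by ring))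

/-- union bound -/
theorem countIn_biUnion_le (F : Finset ℕ) (B : ℕ → Set ℕ) (A : Set ℕ) (x : ℕ)
    (h : ∀ n, 0 < n → n ≤ x → n ∈ A → ∃ s ∈ F, n ∈ B s) :
    (countIn A x : ℝ) ≤ ∑ s ∈ F, (countIn (B s) x : ℝ) := by
  classical
  have : countIn A x ≤ ∑ s ∈ F, countIn (B s) x := by
    unfold countIn
    refine le_trans (Finset.card_le_card ?_) Finset.card_biUnion_le
    intro n hn
    simp only [Finset.mem_filter, Finset.mem_Icc, Finset.mem_biUnion] at hn ⊢
    obtain ⟨s, hs, hs'⟩ := h n (by omega) hn.1.2 hn.2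
    exact ⟨s, hs, hn.1, hs'⟩
  exact_mod_cast this

theorem countIn_bad {S : Set ℕ} {T : ℕ} {ε : ℝ}
    (h : ∀ F : Finset ℕ, (∀ s ∈ F, s ∈ S ∧ T < s) → ∑ s ∈ F, (1 : ℝ) / s < ε) (x : ℕ) :
    (countIn (badSet S T) x : ℝ) ≤ x * ε := by
  classical
  have h1 := countIn_biUnion_le ((Finset.Ioc T x).filter (· ∈ S)) (fun s => {n | s ∣ n})
    (badSet S T) x (by
      rintro n hn hnx ⟨s, hs, hT, hd⟩
      exact ⟨s, by simpa using ⟨⟨hT, (Nat.le_of_dvd hn hd).trans hnx⟩, hs⟩, hd⟩)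
  refine h1.trans ((Finset.sum_le_sum fun s _ => countIn_dvd s x).trans ?_)
  rw [← Finset.mul_sum]
  refine mul_le_mul_of_nonneg_left (h _ ?_).le (by positivity)
  intro s hs
  simp at hs
  exact ⟨hs.2, hs.1.1⟩

theorem countIn_modEq (M v x : ℕ) (hM : 0 < M) :
    (x : ℝ) / M - 1 ≤ countIn {n | n ≡ v [MOD M]} x ∧
    (countIn {n | n ≡ v [MOD M]} x : ℝ) ≤ x / M + 1 := by
  classical
  have h0 : countIn {n | n ≡ v [MOD M]} x =
      ((Finset.Ioc 0 x).filter (fun n => n ≡ v [MOD M])).card := by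
    unfold countIn
    congr 1
    ext n
    simp only [Finset.mem_filter, Finset.mem_Icc, Finset.mem_Ioc, Set.mem_ofPred_eq]
    rfl
  have h := Nat.Ioc_filter_modEq_card 0 x hM v
  rw [← h0] at h
  have e : ((x : ℝ) / M) = (((x:ℚ) / M : ℚ) : ℝ) := by push_cast; rfl
  have key : (x : ℚ) / M - 1 ≤ countIn {n | n ≡ v [MOD M]} x ∧
    (countIn {n | n ≡ v [MOD M]} x : ℚ) ≤ x / M + 1 := by
    have hq : ((countIn {n | n ≡ v [MOD M]} x : ℤ) : ℚ) = countIn {n | n ≡ v [MOD M]} x := by simp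
    rw [← hq, h]
    have a1 := Int.floor_le (((x:ℚ) - v) / M)
    have a2 := Int.lt_floor_add_one (((x:ℚ) - v) / M)
    have a3 := Int.floor_le ((((0:ℕ):ℚ) - v) / M)
    have a4 := Int.lt_floor_add_one ((((0:ℕ):ℚ) - v) / M)
    have e1 : ((x:ℚ) - v) / M = x / M + (((0:ℕ):ℚ) - v) / M := by push_cast; ring
    have : (0:ℚ) ≤ x / M := by positivity
    push_cast at *
    constructor
    · refine le_trans ?_ (le_max_left _ _)
      linarith
    · apply max_le <;> linarith
  rw [e]
  exact ⟨by exact_mod_cast key.1, by exact_mod_cast key.2⟩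

theorem countIn_modEq_dvd (M m s x : ℕ) (hM : 0 < M) (hm : 0 < m) (hmM : m ∣ M) (hs : 0 < s) :
    (countIn {n | n ≡ m [MOD M] ∧ s ∣ n} x : ℝ) ≤ x * m / M * (1 / s) + 1 := by
  by_cases hex : ∃ n0, n0 ≡ m [MOD M] ∧ s ∣ n0
  · obtain ⟨n0, h1, h2⟩ := hex
    have hg : Nat.gcd M s ∣ m := by
      have : Nat.gcd M s ∣ n0 := (Nat.gcd_dvd_right _ _).trans h2
      exact (h1.dvd_iff (Nat.gcd_dvd_left M s)).1 this
    have hl : 0 < Nat.lcm M s := Nat.lcm_pos hM hs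
    have hle : countIn {n | n ≡ m [MOD M] ∧ s ∣ n} x ≤ countIn {n | n ≡ n0 [MOD Nat.lcm M s]} x := by
      apply countIn_mono
      rintro n ⟨h3, h4⟩ -
      have a : n ≡ n0 [MOD M] := h3.trans h1.symm
      have b : n ≡ n0 [MOD s] :=
        ((Nat.modEq_zero_iff_dvd.2 h4).trans (Nat.modEq_zero_iff_dvd.2 h2).symm)
      show n ≡ n0 [MOD Nat.lcm M s]
      rw [Nat.modEq_iff_dvd] at a b ⊢
      have := Int.coe_lcm_dvd a b
      simpa using this
    have h5 := (countIn_modEq (Nat.lcm M s) n0 x hl).2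
    have h6 : M * s ≤ m * Nat.lcm M s := by
      rw [← Nat.gcd_mul_lcm M s]
      exact Nat.mul_le_mul_right _ (Nat.le_of_dvd hm hg)
    have h6' : (M * s : ℝ) ≤ m * Nat.lcm M s := by exact_mod_cast h6
    have hM' : (0 : ℝ) < M := by exact_mod_cast hM
    have hs' : (0 : ℝ) < s := by exact_mod_cast hs
    have hl' : (0 : ℝ) < (Nat.lcm M s : ℝ) := by exact_mod_cast hl
    have h7 : (x : ℝ) / (Nat.lcm M s : ℝ) ≤ x * m / M * (1 / s) := by
      rw [div_mul_div_comm, mul_one, div_le_div_iff₀ hl' (by positivity), mul_assoc]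
      exact mul_le_mul_of_nonneg_left h6' (by positivity)
    have h8 : (countIn {n | n ≡ m [MOD M] ∧ s ∣ n} x : ℝ) ≤
      countIn {n | n ≡ n0 [MOD Nat.lcm M s]} x := by exact_mod_cast hle
    linarith
  · have : countIn {n | n ≡ m [MOD M] ∧ s ∣ n} x = 0 := by
      have h1 := countIn_mono (A := {n | n ≡ m [MOD M] ∧ s ∣ n}) (B := ∅) x
        (fun n hn _ => (hex ⟨n, hn⟩).elim)
      have h2 : countIn ∅ x = 0 := by simp [countIn]
      omega
    rw [this]
    push_cast
    positivity

/-- truncated divisor sum -/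
noncomputable def fTrunc (g : ℕ → ℂ) (T n : ℕ) : ℂ :=
  ∑ d ∈ (Finset.Icc 1 T).filter (· ∣ n), g d

theorem fTrunc_congr (g : ℕ → ℂ) (T : ℕ) {n n' : ℕ} (h : n ≡ n' [MOD T.factorial]) :
    fTrunc g T n = fTrunc g T n' := by
  unfold fTrunc
  congr 1
  apply Finset.filter_congr
  intro d hd
  simp only [Finset.mem_Icc] at hd
  exact h.dvd_iff (Nat.dvd_factorial (by omega) hd.2)

theorem f_eq_fTrunc {f g : ℕ → ℂ} (hfg : MobiusPair f g) {T n : ℕ} (hn : 0 < n)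
    (hb : n ∉ badSet {n | g n ≠ 0} T) : f n = fTrunc g T n := by
  rw [hfg n hn]
  unfold fTrunc
  symm
  apply Finset.sum_subset
  · intro d hd
    simp only [Finset.mem_filter] at hd
    simp [hd.2, hn.ne']
  · intro d hd hd'
    by_contra hne
    have hdn := Nat.dvd_of_mem_divisors hd
    have hd0 := Nat.pos_of_mem_divisors hd
    apply hb
    refine ⟨d, hne, ?_, hdn⟩
    by_contra hT
    apply hd'
    simp only [Finset.mem_filter, Finset.mem_Icc]
    exact ⟨⟨hd0, by omega⟩, hdn⟩

theorem exists_density {f g : ℕ → ℂ} (hfg : MobiusPair f g)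
    (hthin : Thin {n : ℕ | g n ≠ 0}) : ∃ δ : ℝ, HasDensity {n : ℕ | f n ≠ 0} δ := by
  unfold HasDensity
  apply cauchySeq_tendsto_of_complete
  rw [Metric.cauchySeq_iff']
  intro ε hε
  obtain ⟨T, hT⟩ := thin_tail hthin (show 0 < ε / 8 by positivity)
  have hper := hasDensity_periodic (A := {n | fTrunc g T n ≠ 0}) (Nat.factorial_pos T) (by
    intro n _
    have : fTrunc g T (n + T.factorial) = fTrunc g T n := fTrunc_congr g T (by simp [Nat.ModEq])
    simp [this])
  set δ := (countIn {n | fTrunc g T n ≠ 0} T.factorial : ℝ) / T.factorial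
  obtain ⟨N, hN⟩ := Metric.tendsto_atTop.1 hper (ε / 8) (by positivity)
  have key : ∀ x ≥ N + 1, |(countIn {n | f n ≠ 0} x : ℝ) / x - δ| < ε / 2 := by
    intro x hx
    have hx' : (0 : ℝ) < x := by exact_mod_cast (by omega : 0 < x)
    have h1 := hN x (by omega)
    rw [Real.dist_eq, abs_lt] at h1
    have hbad := countIn_bad hT x
    have a1 : countIn {n | f n ≠ 0} x ≤
        countIn {n | fTrunc g T n ≠ 0} x + countIn (badSet {n | g n ≠ 0} T) x := by
      refine (countIn_mono x ?_).trans (countIn_union_le _ _ x)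
      intro n hn hn0
      by_cases hb : n ∈ badSet {n | g n ≠ 0} T
      · exact Or.inr hb
      · left
        show fTrunc g T n ≠ 0
        rw [← f_eq_fTrunc hfg hn0 hb]; exact hn
    have a2 : countIn {n | fTrunc g T n ≠ 0} x ≤
        countIn {n | f n ≠ 0} x + countIn (badSet {n | g n ≠ 0} T) x := by
      refine (countIn_mono x ?_).trans (countIn_union_le _ _ x)
      intro n hn hn0
      by_cases hb : n ∈ badSet {n | g n ≠ 0} T
      · exact Or.inr hb
      · left
        show f n ≠ 0
        rw [f_eq_fTrunc hfg hn0 hb]; exact hn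
    have a1' : (countIn {n | f n ≠ 0} x : ℝ) ≤
        countIn {n | fTrunc g T n ≠ 0} x + countIn (badSet {n | g n ≠ 0} T) x := by
      exact_mod_cast a1
    have a2' : (countIn {n | fTrunc g T n ≠ 0} x : ℝ) ≤
        countIn {n | f n ≠ 0} x + countIn (badSet {n | g n ≠ 0} T) x := by exact_mod_cast a2
    have b1 : (countIn {n | f n ≠ 0} x : ℝ) / x ≤
        (countIn {n | fTrunc g T n ≠ 0} x : ℝ) / x + ε / 8 := by
      rw [div_add' _ _ _ hx'.ne']
      gcongr
      linarith
    have b2 : (countIn {n | fTrunc g T n ≠ 0} x : ℝ) / x ≤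
        (countIn {n | f n ≠ 0} x : ℝ) / x + ε / 8 := by
      rw [div_add' _ _ _ hx'.ne']
      gcongr
      linarith
    rw [abs_lt]
    constructor <;> linarith [h1.1, h1.2]
  refine ⟨N + 1, fun n hn => ?_⟩
  have k1 := key n hn
  have k2 := key (N + 1) le_rfl
  rw [Real.dist_eq]
  rw [abs_lt] at *
  constructor <;> linarith [k1.1, k1.2, k2.1, k2.2]

theorem exists_f_ne {f g : ℕ → ℂ} (hfg : MobiusPair f g)
    (hne : ∃ n : ℕ, 0 < n ∧ (f n ≠ 0 ∨ g n ≠ 0)) : ∃ m, 0 < m ∧ f m ≠ 0 := by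
  by_contra! hf
  have hg : ∀ n, 0 < n → g n = 0 := by
    intro n
    induction n using Nat.strong_induction_on with
    | _ n ih =>
      intro hn
      have h := hfg n hn
      rw [hf n hn, ← Nat.insert_self_properDivisors hn.ne',
        Finset.sum_insert Nat.self_notMem_properDivisors, Finset.sum_eq_zero] at h
      · simpa using h.symm
      · intro d hd
        exact ih d (Nat.mem_properDivisors.1 hd).2 (Nat.pos_of_mem_properDivisors hd)
  obtain ⟨n, hn, h | h⟩ := hne
  · exact h (hf n hn)
  · exact h (hg n hn)

theorem lower_bound {f g : ℕ → ℂ} (hfg : MobiusPair f g)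
    (hne : ∃ n : ℕ, 0 < n ∧ (f n ≠ 0 ∨ g n ≠ 0))
    (hthin : Thin {n : ℕ | g n ≠ 0}) :
    ∃ c K : ℝ, 0 < c ∧ ∀ x : ℕ, c * x - K ≤ countIn {n : ℕ | f n ≠ 0} x := by
  classical
  obtain ⟨m, hm, hfm⟩ := exists_f_ne hfg hne
  have hm' : (0 : ℝ) < m := by exact_mod_cast hm
  obtain ⟨T0, hT0⟩ := thin_tail hthin (show (0 : ℝ) < 1 / (4 * m) by positivity)
  set T := max T0 m with hTdef
  have hT : ∀ F : Finset ℕ, (∀ s ∈ F, s ∈ {n : ℕ | g n ≠ 0} ∧ T < s) →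
      ∑ s ∈ F, (1 : ℝ) / s < 1 / (4 * m) := fun F hF =>
    hT0 F fun s hs => ⟨(hF s hs).1, (le_max_left _ _).trans_lt (hF s hs).2⟩
  set M := T.factorial with hMdef
  have hM : 0 < M := Nat.factorial_pos T
  have hM' : (0 : ℝ) < M := by exact_mod_cast hM
  have hmM : m ∣ M := Nat.dvd_factorial hm (le_max_right _ _)
  obtain ⟨U, hU⟩ := thin_tail hthin (show (0 : ℝ) < 1 / (4 * M) by positivity)
  refine ⟨1 / (2 * M), U + 1, by positivity, fun x => ?_⟩
  set mid : Set ℕ := {n | n ≡ m [MOD M] ∧ ∃ s ∈ {n : ℕ | g n ≠ 0}, T < s ∧ s ≤ U ∧ s ∣ n}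
  have h1 : countIn {n | n ≡ m [MOD M]} x ≤
      countIn {n | f n ≠ 0} x + countIn mid x + countIn (badSet {n | g n ≠ 0} U) x := by
    refine (countIn_mono (B := ({n | f n ≠ 0} ∪ mid) ∪ badSet {n | g n ≠ 0} U) x ?_).trans
      ((countIn_union_le _ _ x).trans (Nat.add_le_add_right (countIn_union_le _ _ x) _))
    intro n hn hn0
    by_cases hb : n ∈ badSet {n | g n ≠ 0} T
    · obtain ⟨s, hs, hTs, hd⟩ := hb
      by_cases hsU : s ≤ U
      · exact Or.inl (Or.inr ⟨hn, s, hs, hTs, hsU, hd⟩)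
      · exact Or.inr ⟨s, hs, by omega, hd⟩
    · left; left
      show f n ≠ 0
      rw [f_eq_fTrunc hfg hn0 hb, fTrunc_congr g T hn, ← f_eq_fTrunc hfg hm]
      · exact hfm
      · rintro ⟨s, -, hTs, hd⟩
        have := Nat.le_of_dvd hm hd
        have := le_max_right T0 m
        omega
  have h2 := countIn_bad hU x
  have h3 := (countIn_modEq M m x hM).1
  have h4 : (countIn mid x : ℝ) ≤ x * m / M * (1 / (4 * m)) + U := by
    refine (countIn_biUnion_le ((Finset.Ioc T U).filter (· ∈ {n : ℕ | g n ≠ 0}))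
      (fun s => {n | n ≡ m [MOD M] ∧ s ∣ n}) mid x ?_).trans ?_
    · rintro n hn hnx ⟨h5, s, hs, hTs, hsU, hd⟩
      exact ⟨s, by simpa using ⟨⟨hTs, hsU⟩, hs⟩, h5, hd⟩
    · refine (Finset.sum_le_sum fun s hs => countIn_modEq_dvd M m s x hM hm hmM ?_).trans ?_
      · simp only [Finset.mem_filter, Finset.mem_Ioc] at hs
        omega
      · rw [Finset.sum_add_distrib, ← Finset.mul_sum]
        refine add_le_add (mul_le_mul_of_nonneg_left (hT _ ?_).le (by positivity)) ?_
        · intro s hs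
          simp only [Finset.mem_filter, Finset.mem_Ioc] at hs
          exact ⟨hs.2, hs.1.1⟩
        · simp only [Finset.sum_const, nsmul_eq_mul, mul_one, Nat.cast_le]
          refine (Finset.card_filter_le _ _).trans ?_
          simp
  have h1' : (countIn {n | n ≡ m [MOD M]} x : ℝ) ≤
      countIn {n | f n ≠ 0} x + countIn mid x + countIn (badSet {n | g n ≠ 0} U) x := by
    exact_mod_cast h1
  have e1 : (x : ℝ) * m / M * (1 / (4 * m)) = x / M / 4 := by field_simp
  have e2 : (x : ℝ) * (1 / (4 * M)) = x / M / 4 := by field_simp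
  have e3 : 1 / (2 * M) * (x : ℝ) = x / M / 2 := by field_simp
  rw [e1] at h4
  rw [e2] at h2
  rw [e3]
  linarith

/-- If `(f,g)` is a nonzero Möbius pair and `supp g` is thin, then `supp f`
has a positive asymptotic density. -/
theorem mobius_pair_thin_supp_g_density_supp_f (f g : ℕ → ℂ)
    (hfg : MobiusPair f g) (hne : ∃ n : ℕ, 0 < n ∧ (f n ≠ 0 ∨ g n ≠ 0))
    (hthin : Thin {n : ℕ | g n ≠ 0}) :
    ∃ δ : ℝ, 0 < δ ∧ HasDensity {n : ℕ | f n ≠ 0} δ := by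
  obtain ⟨δ, hδ⟩ := exists_density hfg hthin
  obtain ⟨c, K, hc, hK⟩ := lower_bound hfg hne hthin
  refine ⟨δ, lt_of_lt_of_le hc ?_, hδ⟩
  have h1 : Tendsto (fun x : ℕ => c - K / (x : ℝ)) atTop (nhds (c - 0)) :=
    tendsto_const_nhds.sub (tendsto_const_div_atTop_nhds_zero_nat K)
  rw [sub_zero] at h1
  refine le_of_tendsto_of_tendsto h1 hδ ?_
  filter_upwards [eventually_gt_atTop 0] with x hx
  have hx' : (0 : ℝ) < x := by exact_mod_cast hx
  rw [sub_div' hx'.ne']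
  gcongr
  exact hK x
end

section
/- If (f,g) is a Möbius pair of complex-valued arithmetic functions, not both identically zero, then it is impossible that both ∑_{n : f(n)≠0} 1/n < ∞ and ∑_{n : g(n)≠0} 1/n < ∞; that is, the supports of f and g cannot both be thin. -/
open Filter

/-- Weighted count of the `k = 1 + M j` divisible by `b`. -/
lemma sum_progression_dvd (M b N : ℕ) (hM : 0 < M) (hb : 0 < b) :
    ∑ j ∈ (Finset.range N).filter (fun j => b ∣ 1 + M * j), (1 : ℝ) / ((1 + M * j : ℕ) : ℝ)
      ≤ (1 / (b : ℝ)) * ∑ j ∈ Finset.range N, (1 : ℝ) / ((1 + M * j : ℕ) : ℝ) := by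
  set J := (Finset.range N).filter (fun j => b ∣ 1 + M * j) with hJ
  let φ : ℕ → ℕ := fun j => ((1 + M * j) / b - 1) / M
  have key : ∀ j ∈ J, ∃ l, 0 < l ∧ 1 + M * j = b * l ∧ φ j = (l - 1) / M := by
    intro j hj
    obtain ⟨l, hl⟩ := (Finset.mem_filter.mp hj).2
    refine ⟨l, ?_, hl, ?_⟩
    · rcases Nat.eq_zero_or_pos l with h | h
      · subst h; simp at hl
      · exact h
    · simp only [φ, hl, Nat.mul_div_cancel_left l hb]
  have hinj : Set.InjOn φ J := by
    intro j hj j' hj' h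
    obtain ⟨l, hl0, hl, hφ⟩ := key j hj
    obtain ⟨l', hl0', hl', hφ'⟩ := key j' hj'
    rw [hφ, hφ'] at h
    have hcop : Nat.Coprime M b := by
      have h1 : Nat.gcd M b ∣ 1 := by
        have h2 : Nat.gcd M b ∣ 1 + M * j := by
          rw [hl]; exact Dvd.dvd.mul_right (Nat.gcd_dvd_right M b) l
        exact (Nat.dvd_add_left (Dvd.dvd.mul_right (Nat.gcd_dvd_left M b) j)).mp h2
      exact Nat.dvd_one.mp h1
    have hmod : b * l ≡ b * l' [MOD M] := by
      rw [← hl, ← hl']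
      simp [Nat.ModEq]
    have hmod2 : l ≡ l' [MOD M] := Nat.ModEq.cancel_left_of_coprime hcop hmod
    have hmod3 : l - 1 ≡ l' - 1 [MOD M] := by
      apply Nat.ModEq.add_right_cancel' 1
      rwa [Nat.sub_add_cancel hl0, Nat.sub_add_cancel hl0']
    have h4 : l - 1 = l' - 1 := by
      rw [← Nat.div_add_mod (l - 1) M, ← Nat.div_add_mod (l' - 1) M, h, hmod3]
    have h5 : l = l' := by omega
    have h6 : M * j = M * j' := by rw [h5] at hl; omega
    exact Nat.eq_of_mul_eq_mul_left hM h6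
  have hb' : (0 : ℝ) < b := by exact_mod_cast hb
  calc ∑ j ∈ J, (1 : ℝ) / ((1 + M * j : ℕ) : ℝ)
      ≤ ∑ j ∈ J, (1 / (b : ℝ)) * ((1 : ℝ) / ((1 + M * φ j : ℕ) : ℝ)) := by
        apply Finset.sum_le_sum
        intro j hj
        obtain ⟨l, hl0, hl, hφ⟩ := key j hj
        rw [hl, hφ, div_mul_div_comm, one_mul]
        have h1 : 1 + M * ((l - 1) / M) ≤ l := by
          have := Nat.mul_div_le (l - 1) M
          omega
        have h2 : (0 : ℝ) < ((1 + M * ((l - 1) / M) : ℕ) : ℝ) := by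
          exact_mod_cast (by omega)
        have h3 : ((1 + M * ((l - 1) / M) : ℕ) : ℝ) ≤ l := by exact_mod_cast h1
        rw [Nat.cast_mul]
        apply one_div_le_one_div_of_le (mul_pos hb' h2)
        exact mul_le_mul_of_nonneg_left h3 hb'.le
    _ = (1 / (b : ℝ)) * ∑ i ∈ J.image φ, (1 : ℝ) / ((1 + M * i : ℕ) : ℝ) := by
        rw [Finset.sum_image hinj, Finset.mul_sum]
    _ ≤ _ := by
        apply mul_le_mul_of_nonneg_left _ (by positivity)
        apply Finset.sum_le_sum_of_subset_of_nonneg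
        · intro i hi
          obtain ⟨j, hj, rfl⟩ := Finset.mem_image.mp hi
          obtain ⟨l, hl0, hl, hφ⟩ := key j hj
          have hjN := Finset.mem_range.mp (Finset.mem_filter.mp hj).1
          rw [Finset.mem_range, hφ]
          refine lt_of_le_of_lt ?_ hjN
          have h1 : l ≤ b * l := Nat.le_mul_of_pos_left l hb
          calc (l - 1) / M ≤ (M * j) / M := Nat.div_le_div_right (by omega)
            _ = j := Nat.mul_div_cancel_left j hM
        · intros; positivity

lemma not_summable_progression (M : ℕ) (hM : 0 < M) :
    ¬ Summable (fun j : ℕ => (1 : ℝ) / ((1 + M * j : ℕ) : ℝ)) := by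
  intro h
  have h1 : Summable (fun j : ℕ => (1 : ℝ) / ((j + 1 : ℕ) : ℝ)) := by
    refine Summable.of_nonneg_of_le (fun j => by positivity) (fun j => ?_) (h.mul_left (M : ℝ))
    have hM1 : (1 : ℝ) ≤ M := by exact_mod_cast hM
    rw [mul_one_div, div_le_div_iff₀ (by positivity) (by positivity)]
    push_cast
    nlinarith
  exact Real.not_summable_one_div_natCast
    ((summable_nat_add_iff (f := fun j : ℕ => (1 : ℝ) / (j : ℝ)) 1).mp h1)

/-- In a nonzero Möbius pair, the supports of `f` and `g` cannot both be thin. -/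
theorem mobius_pair_not_both_thin (f g : ℕ → ℂ)
    (hfg : MobiusPair f g) (hne : ∃ n : ℕ, 0 < n ∧ (f n ≠ 0 ∨ g n ≠ 0)) :
    ¬ (Thin {n : ℕ | f n ≠ 0} ∧ Thin {n : ℕ | g n ≠ 0}) := by
  classical
  rintro ⟨hF, hG⟩
  have hv := summable_subtype_iff_indicator (f := fun a : ℕ => (1 : ℝ) / a) |>.mp hF
  have hu := summable_subtype_iff_indicator (f := fun a : ℕ => (1 : ℝ) / a) |>.mp hG
  set v := Set.indicator {n : ℕ | f n ≠ 0} (fun a : ℕ => (1 : ℝ) / a) with hvdef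
  set u := Set.indicator {n : ℕ | g n ≠ 0} (fun a : ℕ => (1 : ℝ) / a) with hudef
  have hv0 : ∀ a, 0 ≤ v a := fun a => Set.indicator_nonneg (fun _ _ => by positivity) a
  have hex : ∃ n : ℕ, 0 < n ∧ g n ≠ 0 := by
    by_contra! hcon
    obtain ⟨n, hn, h | h⟩ := hne
    · apply h
      rw [hfg n hn]
      exact Finset.sum_eq_zero (fun d hd => hcon d (Nat.pos_of_mem_divisors hd))
    · exact h (hcon n hn)
  obtain ⟨n, ⟨hn, hgn⟩, hmin⟩ : ∃ n : ℕ, (0 < n ∧ g n ≠ 0) ∧ ∀ d, 0 < d → g d ≠ 0 → n ≤ d :=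
    ⟨Nat.find hex, Nat.find_spec hex, fun d hd hgd => Nat.find_min' hex ⟨hd, hgd⟩⟩
  have hnR : (0 : ℝ) < n := by exact_mod_cast hn
  obtain ⟨T, hT⟩ := summable_iff_vanishing_norm.mp hu (1 / (2 * n)) (by positivity)
  set M := ∏ d ∈ T.erase 0, d with hMdef
  have hM : 0 < M := Finset.prod_pos (fun d hd => Nat.pos_of_ne_zero (Finset.ne_of_mem_erase hd))
  let b : ℕ → ℕ := fun d => d / Nat.gcd d n
  have hbd : ∀ d, b d ∣ d := fun d => Nat.div_dvd_of_dvd (Nat.gcd_dvd_left d n)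
  have hbpos : ∀ d, 0 < d → 0 < b d := fun d hd => Nat.pos_of_dvd_of_pos (hbd d) hd
  have hbinv : ∀ d, 0 < d → (1 : ℝ) / (b d : ℝ) ≤ n * (1 / (d : ℝ)) := by
    intro d hd
    have h1 : (d : ℝ) = b d * (Nat.gcd d n : ℕ) := by
      exact_mod_cast (Nat.div_mul_cancel (Nat.gcd_dvd_left d n)).symm
    have h2 : ((Nat.gcd d n : ℕ) : ℝ) ≤ n := by exact_mod_cast Nat.gcd_le_right d hn
    have h3 : (0 : ℝ) < b d := by exact_mod_cast hbpos d hd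
    have h4 : (0 : ℝ) < d := by exact_mod_cast hd
    rw [mul_one_div, div_le_div_iff₀ h3 h4, one_mul]
    nlinarith
  have hdich : ∀ j : ℕ, f (n * (1 + M * j)) = 0 →
      ∃ d, 0 < d ∧ g d ≠ 0 ∧ d ∉ T ∧ d ∣ n * (1 + M * j) ∧ b d ∣ 1 + M * j := by
    intro j hf
    have hpos : 0 < n * (1 + M * j) := Nat.mul_pos hn (by omega)
    have h1 : ∃ d, d ∣ n * (1 + M * j) ∧ d ≠ n ∧ g d ≠ 0 := by
      by_contra! hcon
      rw [hfg _ hpos, Finset.sum_eq_single n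
        (fun d hd hdn => hcon d (Nat.dvd_of_mem_divisors hd) hdn)
        (fun h => absurd (Nat.mem_divisors.mpr ⟨Nat.dvd_mul_right _ _, hpos.ne'⟩) h)] at hf
      exact hgn hf
    obtain ⟨d, hd, hdn, hgd⟩ := h1
    have hd0 : 0 < d := Nat.pos_of_dvd_of_pos hd hpos
    have hbk : b d ∣ 1 + M * j := by
      have hg0 : 0 < Nat.gcd d n := Nat.gcd_pos_of_pos_left n hd0
      have hc : Nat.Coprime (d / Nat.gcd d n) (n / Nat.gcd d n) := Nat.coprime_div_gcd_div_gcd hg0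
      refine hc.dvd_of_dvd_mul_left ?_
      have h2 : Nat.gcd d n * (d / Nat.gcd d n)
          ∣ Nat.gcd d n * (n / Nat.gcd d n * (1 + M * j)) := by
        rw [← mul_assoc, Nat.mul_div_cancel' (Nat.gcd_dvd_left d n),
          Nat.mul_div_cancel' (Nat.gcd_dvd_right d n)]
        exact hd
      exact Nat.dvd_of_mul_dvd_mul_left hg0 h2
    refine ⟨d, hd0, hgd, ?_, hd, hbk⟩
    intro hdT
    have h3 : b d ∣ M := (hbd d).trans
      (Finset.dvd_prod_of_mem (fun d => d) (Finset.mem_erase.mpr ⟨hd0.ne', hdT⟩))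
    have h4 : b d ∣ 1 := (Nat.dvd_add_left (h3.mul_right j)).mp hbk
    have h5 : b d = 1 := Nat.dvd_one.mp h4
    have h6 : d = Nat.gcd d n := by
      have := Nat.div_mul_cancel (Nat.gcd_dvd_left d n)
      change b d * Nat.gcd d n = d at this
      rw [h5, one_mul] at this
      exact this.symm
    have h7 : d ≤ n := h6 ▸ Nat.gcd_le_right d hn
    exact hdn (le_antisymm h7 (hmin d hd0 hgd))
  refine not_summable_progression M hM
    (summable_of_sum_range_le (c := 2 * (n * ∑' a, v a)) (fun j => by positivity) (fun N => ?_))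
  set S := ∑ j ∈ Finset.range N, (1 : ℝ) / ((1 + M * j : ℕ) : ℝ) with hS
  have hS0 : 0 ≤ S := Finset.sum_nonneg (fun j _ => by positivity)
  let D := (Finset.range (n * (1 + M * N) + 1)).filter (fun d => 0 < d ∧ g d ≠ 0 ∧ d ∉ T)
  have hpt : ∀ j ∈ Finset.range N, (1 : ℝ) / ((1 + M * j : ℕ) : ℝ) ≤
      n * v (n * (1 + M * j)) +
        ∑ d ∈ D, if b d ∣ 1 + M * j then (1 : ℝ) / ((1 + M * j : ℕ) : ℝ) else 0 := by
    intro j hj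
    have hj := Finset.mem_range.mp hj
    have hs0 : ∀ d ∈ D, (0 : ℝ) ≤
        if b d ∣ 1 + M * j then (1 : ℝ) / ((1 + M * j : ℕ) : ℝ) else 0 := by
      intro d _
      split_ifs <;> positivity
    by_cases hf : f (n * (1 + M * j)) = 0
    · obtain ⟨d, hd0, hgd, hdT, hdk, hbk⟩ := hdich j hf
      have hdD : d ∈ D := by
        refine Finset.mem_filter.mpr ⟨Finset.mem_range.mpr ?_, hd0, hgd, hdT⟩
        have h1 := Nat.le_of_dvd (Nat.mul_pos hn (by omega)) hdk
        have h2 : n * (1 + M * j) ≤ n * (1 + M * N) := by gcongr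
        omega
      have h3 := Finset.single_le_sum hs0 hdD
      rw [if_pos hbk] at h3
      have := mul_nonneg hnR.le (hv0 (n * (1 + M * j)))
      linarith
    · have h1 : v (n * (1 + M * j)) = 1 / ((n * (1 + M * j) : ℕ) : ℝ) :=
        Set.indicator_of_mem (s := {n : ℕ | f n ≠ 0}) hf _
      have h2 := Finset.sum_nonneg hs0
      have h3 : n * v (n * (1 + M * j)) = (1 : ℝ) / ((1 + M * j : ℕ) : ℝ) := by
        rw [h1, Nat.cast_mul]
        have : ((1 + M * j : ℕ) : ℝ) ≠ 0 := by positivity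
        field_simp
      linarith
  have hfirst : ∑ j ∈ Finset.range N, n * v (n * (1 + M * j)) ≤ n * ∑' a, v a := by
    rw [← Finset.mul_sum]
    apply mul_le_mul_of_nonneg_left _ hnR.le
    have hinj : Set.InjOn (fun j => n * (1 + M * j)) (Finset.range N : Set ℕ) := by
      intro x _ y _ h
      have h1 := Nat.eq_of_mul_eq_mul_left hn h
      exact Nat.eq_of_mul_eq_mul_left hM (by omega)
    rw [← Finset.sum_image (f := v) hinj]
    exact hv.sum_le_tsum _ (fun a _ => hv0 a)
  have hsecond : ∑ j ∈ Finset.range N,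
      ∑ d ∈ D, (if b d ∣ 1 + M * j then (1 : ℝ) / ((1 + M * j : ℕ) : ℝ) else 0) ≤ S / 2 := by
    rw [Finset.sum_comm]
    have hdisj : Disjoint D T :=
      Finset.disjoint_left.mpr (fun d hd => (Finset.mem_filter.mp hd).2.2.2)
    have hsmall : ∑ d ∈ D, u d ≤ 1 / (2 * n) :=
      (le_abs_self _).trans (hT D hdisj).le
    calc _ ≤ ∑ d ∈ D, (n * u d) * S := by
          apply Finset.sum_le_sum
          intro d hd
          obtain ⟨_, hd0, hgd, _⟩ := Finset.mem_filter.mp hd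
          rw [← Finset.sum_filter]
          refine (sum_progression_dvd M (b d) N hM (hbpos d hd0)).trans ?_
          apply mul_le_mul_of_nonneg_right _ hS0
          have h1 : u d = 1 / (d : ℝ) :=
            Set.indicator_of_mem (s := {n : ℕ | g n ≠ 0}) hgd _
          rw [h1]
          exact hbinv d hd0
      _ = (n * ∑ d ∈ D, u d) * S := by rw [← Finset.sum_mul, ← Finset.mul_sum]
      _ ≤ (n * (1 / (2 * n))) * S := by gcongr
      _ = S / 2 := by field_simp
  have htot := Finset.sum_le_sum hpt
  rw [Finset.sum_add_distrib] at htot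
  linarith
end

section
/- Let Z be any increasing real-valued function on [2,∞) that tends to infinity. Then there exists a Möbius pair (f,g) of complex-valued arithmetic functions, not both identically zero, such that ∑_{n ≤ x, n ∈ supp(g)} 1/n < Z(x) for all sufficiently large x, while the support of f has asymptotic density zero. -/
open Filter

open ArithmeticFunction

noncomputable def TT (Z : ℝ → ℝ) : ℕ → ℝ
  | 0 => 1
  | n + 1 => open Classical in
    if (n + 1).Prime ∧ TT Z n * (1 + 1 / ((n + 1 : ℕ) : ℝ)) < Z ((n + 1 : ℕ) : ℝ) then
      TT Z n * (1 + 1 / ((n + 1 : ℕ) : ℝ)) else TT Z n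

def PP (Z : ℝ → ℝ) : Set ℕ := {p | p.Prime ∧ TT Z (p - 1) * (1 + 1 / (p : ℝ)) < Z p}

open Classical in
theorem TT_succ (Z : ℝ → ℝ) (n : ℕ) :
    TT Z (n + 1) = TT Z n * (if n + 1 ∈ PP Z then (1 + 1 / ((n + 1 : ℕ) : ℝ)) else 1) := by
  rw [TT]
  simp only [PP, Set.mem_ofPred_eq, Nat.add_sub_cancel]
  split_ifs <;> simp

theorem TT_ge_one (Z : ℝ → ℝ) (n : ℕ) : 1 ≤ TT Z n := by
  induction n with
  | zero => simp [TT]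
  | succ n ih =>
    rw [TT_succ]
    split_ifs
    · have : (0 : ℝ) ≤ 1 / ((n + 1 : ℕ) : ℝ) := by positivity
      nlinarith
    · simpa using ih

theorem TT_lt (Z : ℝ → ℝ) (hZ : MonotoneOn Z (Set.Ici (2 : ℝ))) (n : ℕ) :
    TT Z n = 1 ∨ (2 ≤ n ∧ TT Z n < Z n) := by
  induction n with
  | zero => simp [TT]
  | succ n ih =>
    rw [TT_succ]
    split_ifs with h
    · right
      exact ⟨h.1.two_le, by simpa using h.2⟩
    · rw [mul_one]
      rcases ih with h | ⟨h2, h⟩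
      · exact Or.inl h
      · refine Or.inr ⟨by omega, h.trans_le (hZ ?_ ?_ ?_)⟩
        · simpa using h2
        · have : (2 : ℝ) ≤ n := by exact_mod_cast h2
          simp; linarith
        · simp

theorem TT_unbdd (Z : ℝ → ℝ) (hZinf : Tendsto Z atTop atTop) (B : ℝ) : ∃ n, B < TT Z n := by
  by_contra! hB
  have hZn : Tendsto (fun n : ℕ => Z n) atTop atTop := hZinf.comp tendsto_natCast_atTop_atTop
  obtain ⟨N, hN⟩ := eventually_atTop.1 (hZn.eventually_gt_atTop (2 * B))
  apply not_summable_one_div_on_primes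
  rw [← summable_nat_add_iff (N + 1)]
  refine summable_of_sum_range_le (c := B) ?_ ?_
  · intro n
    exact Set.indicator_nonneg (fun _ _ => by positivity) _
  · intro m
    refine le_trans ?_ (hB (N + m))
    induction m with
    | zero => simpa using le_trans zero_le_one (TT_ge_one Z N)
    | succ m ih =>
      rw [Finset.sum_range_succ, ← add_assoc N m 1, TT_succ]
      have h1 := TT_ge_one Z (N + m)
      have e : m + (N + 1) = N + m + 1 := by ring
      rw [e]
      by_cases hp : (N + m + 1).Prime
      · have hp0 : (0 : ℝ) < 1 / ((N + m + 1 : ℕ) : ℝ) := by positivity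
        have hp1 : 1 / ((N + m + 1 : ℕ) : ℝ) ≤ 1 := by
          rw [div_le_one (by positivity)]; exact_mod_cast hp.one_lt.le
        have hmem : N + m + 1 ∈ PP Z := by
          refine ⟨hp, lt_of_le_of_lt ?_ (hN (N + m + 1) (by omega))⟩
          have := hB (N + m)
          simp only [Nat.add_sub_cancel]
          nlinarith
        rw [if_pos hmem, Set.indicator_of_mem (by exact hp)]
        nlinarith
      · rw [Set.indicator_of_notMem (by exact hp), if_neg (fun h => hp h.1)]
        linarith

open Classical in
noncomputable def PF (Z : ℝ → ℝ) (n : ℕ) : Finset ℕ := (Finset.Icc 1 n).filter (· ∈ PP Z)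

theorem PF_prime {Z : ℝ → ℝ} {n p : ℕ} (h : p ∈ PF Z n) : p.Prime := by
  simp only [PF, Finset.mem_filter] at h
  exact h.2.1

theorem TT_eq (Z : ℝ → ℝ) (n : ℕ) : TT Z n = ∏ p ∈ PF Z n, (1 + 1 / (p : ℝ)) := by
  classical
  rw [PF, Finset.prod_filter]
  induction n with
  | zero => simp [TT]
  | succ n ih => rw [Finset.prod_Icc_succ_top (by omega), TT_succ, ih]

open Classical in
noncomputable def gg (A : Set ℕ) (d : ℕ) : ℂ :=
  if (∀ p ∈ d.primeFactors, p ∈ A) then (moebius d : ℂ) else 0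

theorem gg_sum_zero (A : Set ℕ) (n p : ℕ) (hn : 0 < n) (hp : p.Prime) (hA : p ∈ A) (hpn : p ∣ n) :
    ∑ d ∈ n.divisors, gg A d = 0 := by
  classical
  set s := n.primeFactors.filter (· ∈ A) with hs
  have hsp : ∀ q ∈ s, q.Prime := fun q hq => Nat.prime_of_mem_primeFactors (Finset.mem_filter.1 hq).1
  set r := ∏ q ∈ s, q with hr
  have hrf : r.primeFactors = s := Nat.primeFactors_prod hsp
  have hr0 : r ≠ 0 := Finset.prod_ne_zero_iff.2 fun q hq => (hsp q hq).ne_zero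
  have hrn : r ∣ n := (Finset.prod_dvd_prod_of_subset _ _ _ (Finset.filter_subset _ _)).trans
    (Nat.prod_primeFactors_dvd n)
  have hps : p ∈ s := by simp [hs, hp, hpn, hn.ne', hA]
  have hr1 : r ≠ 1 := by
    intro h
    rw [h] at hrf
    simp [← hrf] at hps
  rw [← Finset.sum_subset (Nat.divisors_subset_of_dvd hn.ne' hrn)]
  · have h2 : ∀ d ∈ r.divisors, gg A d = ((moebius d : ℤ) : ℂ) := by
      intro d hd
      rw [gg, if_pos]
      intro q hq
      have := Nat.primeFactors_mono (Nat.dvd_of_mem_divisors hd) hr0 hq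
      rw [hrf] at this
      exact (Finset.mem_filter.1 this).2
    rw [Finset.sum_congr rfl h2, ← Int.cast_sum, ← coe_mul_zeta_apply, moebius_mul_coe_zeta]
    simp [hr1]
  · intro d hd hdr
    rw [gg]
    split_ifs with h
    · by_contra hne
      have hsq : Squarefree d := by
        rw [← moebius_ne_zero_iff_squarefree]; exact_mod_cast hne
      apply hdr
      rw [Nat.mem_divisors]
      refine ⟨?_, hr0⟩
      rw [← Nat.prod_primeFactors_of_squarefree hsq]
      apply Finset.prod_dvd_prod_of_subset
      intro q hq
      exact Finset.mem_filter.2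
        ⟨Nat.primeFactors_mono (Nat.dvd_of_mem_divisors hd) hn.ne' hq, h q hq⟩
    · rfl

theorem sum_supp_le (Z : ℝ → ℝ) (m : ℕ) :
    (∑ n ∈ Finset.Icc 1 m, if gg (PP Z) n ≠ 0 then (1 : ℝ) / n else 0) ≤ TT Z m := by
  rw [TT_eq, Finset.prod_one_add, ← Finset.sum_filter]
  have key : ∀ n ∈ (Finset.Icc 1 m).filter (fun n => gg (PP Z) n ≠ 0),
      Squarefree n ∧ n.primeFactors ⊆ PF Z m := by
    intro n hn
    rw [Finset.mem_filter, Finset.mem_Icc, gg] at hn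
    obtain ⟨⟨h1, h2⟩, h3⟩ := hn
    split_ifs at h3 with h
    · refine ⟨?_, ?_⟩
      · rw [← moebius_ne_zero_iff_squarefree]; exact_mod_cast h3
      · intro q hq
        simp only [PF, Finset.mem_filter, Finset.mem_Icc]
        exact ⟨⟨(Nat.prime_of_mem_primeFactors hq).one_lt.le,
          (Nat.le_of_mem_primeFactors hq).trans h2⟩, h q hq⟩
    · simp at h3
  have hinj : Set.InjOn Nat.primeFactors
      ((Finset.Icc 1 m).filter (fun n => gg (PP Z) n ≠ 0) : Set ℕ) := by
    intro a ha b hb hab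
    rw [← Nat.prod_primeFactors_of_squarefree (key a ha).1,
      ← Nat.prod_primeFactors_of_squarefree (key b hb).1, hab]
  calc _ = ∑ n ∈ (Finset.Icc 1 m).filter (fun n => gg (PP Z) n ≠ 0),
        ∏ p ∈ n.primeFactors, 1 / (p : ℝ) := by
        refine Finset.sum_congr rfl fun n hn => ?_
        nth_rewrite 1 [← Nat.prod_primeFactors_of_squarefree (key n hn).1]
        simp
    _ = ∑ s ∈ ((Finset.Icc 1 m).filter (fun n => gg (PP Z) n ≠ 0)).image Nat.primeFactors,
        ∏ p ∈ s, 1 / (p : ℝ) := by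
        rw [Finset.sum_image hinj]
    _ ≤ _ := by
        refine Finset.sum_le_sum_of_subset_of_nonneg ?_ ?_
        · intro s hs
          obtain ⟨n, hn, rfl⟩ := Finset.mem_image.1 hs
          exact Finset.mem_powerset.2 (key n hn).2
        · intro s _ _
          exact Finset.prod_nonneg fun _ _ => by positivity

theorem totient_le (Z : ℝ → ℝ) (n : ℕ) :
    ((∏ p ∈ PF Z n, p).totient : ℝ) * TT Z n ≤ ((∏ p ∈ PF Z n, p : ℕ) : ℝ) := by
  have h := Nat.totient_eq_mul_prod_factors (∏ p ∈ PF Z n, p)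
  rw [Nat.primeFactors_prod (fun p hp => PF_prime hp)] at h
  have h' : ((∏ p ∈ PF Z n, p).totient : ℝ)
      = ((∏ p ∈ PF Z n, p : ℕ) : ℝ) * ∏ p ∈ PF Z n, (1 - (p : ℝ)⁻¹) := by
    have h2 := congrArg (fun q : ℚ => (q : ℝ)) h
    push_cast at h2
    push_cast
    exact h2
  rw [h', mul_assoc, TT_eq, ← Finset.prod_mul_distrib]
  refine mul_le_of_le_one_right (by positivity) (Finset.prod_le_one ?_ ?_)
  all_goals
    intro p hp
    have h1 : (1 : ℝ) ≤ p := by exact_mod_cast (PF_prime hp).one_lt.le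
    have h2 : (p : ℝ)⁻¹ ≤ 1 := inv_le_one_of_one_le₀ h1
    have h3 : (0 : ℝ) < (p : ℝ)⁻¹ := by positivity
    rw [one_div]
    nlinarith

theorem count_le (Z : ℝ → ℝ) (S : Set ℕ)
    (hS : ∀ n ∈ S, 0 < n → ∀ p ∈ PP Z, ¬ p ∣ n) (N x : ℕ) :
    countIn S x ≤ (∏ p ∈ PF Z N, p).totient * (x / (∏ p ∈ PF Z N, p) + 1) := by
  classical
  have hM : 0 < ∏ p ∈ PF Z N, p := Finset.prod_pos fun p hp => (PF_prime hp).pos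
  refine le_trans ?_ (Nat.Ico_filter_coprime_le 1 x hM.ne')
  apply Finset.card_le_card
  intro n hn
  simp only [Finset.mem_filter, Finset.mem_Icc] at hn
  simp only [Finset.mem_filter, Finset.mem_Ico]
  refine ⟨by omega, Nat.Coprime.prod_left fun p hp => ?_⟩
  rw [(PF_prime hp).coprime_iff_not_dvd]
  exact hS n hn.2 (by omega) p (Finset.mem_filter.1 hp).2

/-- For any increasing `Z : [2,∞) → ℝ` tending to infinity, there is a nonzero
Möbius pair `(f,g)` with `∑_{n ≤ x, n ∈ supp g} 1/n < Z(x)` for all large `x`,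
while `supp f` has asymptotic density zero. -/
theorem exists_mobius_pair_thin_like_g_sparse_f (Z : ℝ → ℝ)
    (hZmono : MonotoneOn Z (Set.Ici (2 : ℝ))) (hZinf : Tendsto Z atTop atTop) :
    ∃ f g : ℕ → ℂ, MobiusPair f g ∧ (∃ n : ℕ, 0 < n ∧ (f n ≠ 0 ∨ g n ≠ 0)) ∧
      (∀ᶠ x : ℝ in atTop,
        (∑ n ∈ Finset.Icc 1 ⌊x⌋₊, if g n ≠ 0 then (1 : ℝ) / n else 0) < Z x) ∧
      HasDensity {n : ℕ | f n ≠ 0} 0 := by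
  refine ⟨fun n => ∑ d ∈ n.divisors, gg (PP Z) d, gg (PP Z), fun n _ => rfl,
    ⟨1, one_pos, Or.inr (by simp [gg])⟩, ?_, ?_⟩
  · filter_upwards [hZinf.eventually_gt_atTop 1, eventually_ge_atTop 2] with x hx hx2
    refine lt_of_le_of_lt (sum_supp_le Z ⌊x⌋₊) ?_
    rcases TT_lt Z hZmono ⌊x⌋₊ with h | ⟨h2, h⟩
    · rwa [h]
    · refine h.trans_le (hZmono ?_ hx2 (Nat.floor_le (by linarith)))
      simpa using h2
  · rw [HasDensity, Metric.tendsto_atTop]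
    intro ε hε
    obtain ⟨N, hN⟩ := TT_unbdd Z hZinf (2 / ε)
    set M := ∏ p ∈ PF Z N, p with hMdef
    have hM : 0 < M := Finset.prod_pos fun p hp => (PF_prime hp).pos
    have hMR : (0 : ℝ) < M := by exact_mod_cast hM
    have htot := totient_le Z N
    rw [← hMdef] at htot
    have hφ : (M.totient : ℝ) ≤ ε / 2 * M := by
      have h0 : (0 : ℝ) ≤ M.totient := by positivity
      have h1 : (M.totient : ℝ) * (2 / ε) ≤ M := le_trans (by gcongr) htot
      rw [mul_div_assoc', div_le_iff₀ hε] at h1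
      linarith
    obtain ⟨X, hX⟩ := exists_nat_gt (M * 2 / ε * M)
    refine ⟨X + 1, fun x hx => ?_⟩
    have hx0 : (0 : ℝ) < x := by exact_mod_cast (by omega : 0 < x)
    have hxX : (X : ℝ) < x := by exact_mod_cast (by omega : X < x)
    have hc := count_le Z {n : ℕ | ∑ d ∈ n.divisors, gg (PP Z) d ≠ 0}
      (fun n hn h0 p hp hpn => hn (gg_sum_zero _ n p h0 hp.1 hp hpn)) N x
    rw [← hMdef] at hc
    have hc' : (countIn {n : ℕ | ∑ d ∈ n.divisors, gg (PP Z) d ≠ 0} x : ℝ)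
        ≤ ε / 2 * x + M.totient := by
      calc _ ≤ ((M.totient * (x / M + 1) : ℕ) : ℝ) := by exact_mod_cast hc
        _ = M.totient * ((x / M : ℕ) : ℝ) + M.totient := by push_cast; ring
        _ ≤ (ε / 2 * M) * (x / M : ℝ) + M.totient := by
          gcongr
          exact Nat.cast_div_le
        _ = _ := by field_simp
    have hlast : (M.totient : ℝ) < ε / 2 * x := by
      have h1 : (M.totient : ℝ) ≤ M := by exact_mod_cast Nat.totient_le M
      have h2 : (1 : ℝ) ≤ M := by exact_mod_cast hM
      have h3 : M * 2 / ε * M < (x : ℝ) := hX.trans hxX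
      have h4 : M * 2 / ε ≤ M * 2 / ε * (M : ℝ) := le_mul_of_one_le_right (by positivity) h2
      have h5 : M * 2 / ε < (x : ℝ) := by linarith
      rw [div_lt_iff₀ hε] at h5
      linarith
    rw [Real.dist_eq, sub_zero, abs_of_nonneg (by positivity), div_lt_iff₀ hx0]
    linarith
end

section
/- Let A be a set of natural numbers whose set of multiples M(A) possesses an asymptotic density. Then d(M(A)) ≤ 1 − ∏_{a∈A} (1 − 1/a), where the product is interpreted as the infinite product over all elements of A. -/
open Filter

/-- The set of multiples of `A`: positive integers with at least one divisor in `A`. -/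
def setOfMultiples (A : Set ℕ) : Set ℕ := {n : ℕ | 0 < n ∧ ∃ a ∈ A, a ∣ n}

open scoped Classical in
noncomputable def hrC (F : Finset ℕ) (N : ℕ) : ℕ :=
  ((Finset.Ico 1 (N + 1)).filter (fun n => ∀ b ∈ F, ¬ b ∣ n)).card

lemma hrC_mul (F : Finset ℕ) (M : ℕ) (hM : ∀ b ∈ F, b ∣ M) (k : ℕ) :
    hrC F (M * k) = k * hrC F M := by
  classical
  have hp : Function.Periodic (fun n => ∀ b ∈ F, ¬ b ∣ n) M := by
    intro n
    simp only [eq_iff_iff]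
    refine forall₂_congr fun b hb => ?_
    rw [Nat.dvd_add_left (hM b hb)]
  have h1 : ∀ n, ((Finset.Ico n (n + M)).filter (fun n => ∀ b ∈ F, ¬ b ∣ n)).card
      = hrC F M := by
    intro n
    have e1 := Nat.filter_Ico_card_eq_of_periodic n M _ hp
    have e2 := Nat.filter_Ico_card_eq_of_periodic 1 M _ hp
    rw [e1, ← e2, hrC, add_comm 1 M]
  induction k with
  | zero => simp [hrC]
  | succ k ih =>
    have h2 : hrC F (M * (k + 1)) = hrC F (M * k) + hrC F M := by
      rw [← h1 (M * k + 1), hrC, hrC]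
      have : Finset.Ico 1 (M * (k + 1) + 1) = Finset.Ico 1 (M * k + 1) ∪
          Finset.Ico (M * k + 1) (M * k + 1 + M) := by
        rw [Finset.Ico_union_Ico_eq_Ico (by omega) (by omega)]
        congr 1
        ring
      rw [this, Finset.filter_union, Finset.card_union_of_disjoint]
      exact Finset.disjoint_filter_filter (Finset.Ico_disjoint_Ico_consecutive _ _ _)
    rw [h2, ih]; ring

lemma hrC_insert (F : Finset ℕ) (a M : ℕ) (ha : 0 < a) :
    hrC F (a * M) ≤ hrC (insert a F) (a * M) + hrC F M := by
  classical
  have hsub : (Finset.Ico 1 (a * M + 1)).filter (fun n => ∀ b ∈ F, ¬ b ∣ n) ⊆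
      (Finset.Ico 1 (a * M + 1)).filter (fun n => ∀ b ∈ insert a F, ¬ b ∣ n) ∪
      ((Finset.Ico 1 (M + 1)).filter (fun n => ∀ b ∈ F, ¬ b ∣ n)).image (fun m => a * m) := by
    intro n hn
    simp only [Finset.mem_filter, Finset.mem_Ico, Finset.mem_union, Finset.mem_image,
      Finset.mem_insert] at hn ⊢
    obtain ⟨⟨h1, h2⟩, h3⟩ := hn
    by_cases hd : a ∣ n
    · right
      obtain ⟨m, rfl⟩ := hd
      refine ⟨m, ⟨⟨Nat.pos_of_ne_zero ?_, ?_⟩, fun b hb hbm => h3 b hb (hbm.mul_left a)⟩, rfl⟩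
      · rintro rfl; simp at h1
      · have : m ≤ M := Nat.le_of_mul_le_mul_left (Nat.lt_succ_iff.mp h2) ha
        omega
    · left
      refine ⟨⟨h1, h2⟩, ?_⟩
      rintro b (rfl | hb)
      · exact hd
      · exact h3 b hb
  have h := (Finset.card_le_card hsub).trans (Finset.card_union_le _ _)
  have h' := h.trans (Nat.add_le_add_left Finset.card_image_le _)
  unfold hrC
  convert h'

lemma hrC_ge (F : Finset ℕ) (hF : ∀ b ∈ F, 0 < b) :
    ∀ N, (∏ b ∈ F, b) ∣ N → (N : ℝ) * ∏ b ∈ F, (1 - 1 / (b : ℝ)) ≤ hrC F N := by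
  classical
  induction F using Finset.induction_on with
  | empty => intro N _; simp [hrC]
  | insert a F haF ih =>
    intro N hN
    rw [Finset.prod_insert haF] at hN
    obtain ⟨k, rfl⟩ := hN
    have ha : 0 < a := hF a (by simp)
    set M := (∏ b ∈ F, b) * k with hM
    have hMd : (∏ b ∈ F, b) ∣ M := Dvd.intro _ rfl
    have i1 := ih (fun b hb => hF b (by simp [hb])) M hMd
    have i2 := hrC_mul F M (fun b hb => (Finset.dvd_prod_of_mem _ hb).trans hMd) a
    have i3 := hrC_insert F a M ha
    rw [mul_comm a M, i2] at i3
    rw [mul_assoc, ← hM, Finset.prod_insert haF, mul_comm a M]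
    have i3' : (a : ℝ) * hrC F M ≤ hrC (insert a F) (M * a) + hrC F M := by exact_mod_cast i3
    have ha1 : (1 : ℝ) ≤ a := by exact_mod_cast ha
    have e : ((M * a : ℕ) : ℝ) * ((1 - 1 / (a : ℝ)) * ∏ b ∈ F, (1 - 1 / (b : ℝ)))
        = (a - 1) * (M * ∏ b ∈ F, (1 - 1 / (b : ℝ))) := by
      push_cast
      field_simp
    rw [e]
    nlinarith [mul_le_mul_of_nonneg_left i1 (sub_nonneg.2 ha1)]

lemma hr_count (A : Set ℕ) (F : Finset ℕ) (x : ℕ) (T : ℝ)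
    (hT : ∀ G : Finset ℕ, (∀ g ∈ G, g ∈ A) → Disjoint F G → ∑ g ∈ G, 1 / (g : ℝ) ≤ T) :
    (countIn (setOfMultiples A) x : ℝ) + hrC F x ≤ x + x * T := by
  classical
  set G := (Finset.Ico 1 (x + 1)).filter (fun g => g ∈ A ∧ g ∉ F) with hG
  have hsub : (Finset.Icc 1 x).filter (fun n => n ∈ setOfMultiples A) ⊆
      (Finset.Ico 1 (x + 1)).filter (fun n => ¬ ∀ b ∈ F, ¬ b ∣ n) ∪
      G.biUnion (fun g => (Finset.Ioc 0 x).filter (fun n => g ∣ n)) := by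
    intro n hn
    simp only [Finset.mem_filter, Finset.mem_Icc, setOfMultiples, Set.mem_setOf_eq] at hn
    obtain ⟨⟨h1, h2⟩, _, a, haA, had⟩ := hn
    have hle := Nat.le_of_dvd h1 had
    have hpos := Nat.pos_of_dvd_of_pos had h1
    simp only [Finset.mem_union, Finset.mem_filter, Finset.mem_biUnion, Finset.mem_Ico,
      Finset.mem_Ioc, hG]
    by_cases haF : a ∈ F
    · left
      exact ⟨⟨h1, by omega⟩, fun hh => hh a haF had⟩
    · right
      exact ⟨a, ⟨⟨hpos, by omega⟩, haA, haF⟩, ⟨by omega, h2⟩, had⟩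
  have h1 := (Finset.card_le_card hsub).trans (Finset.card_union_le _ _)
  have h2 := h1.trans (Nat.add_le_add_left Finset.card_biUnion_le _)
  have h3 := Finset.card_filter_add_card_filter_not (s := Finset.Ico 1 (x + 1))
    (fun n => ∀ b ∈ F, ¬ b ∣ n)
  rw [Nat.card_Ico, Nat.add_sub_cancel] at h3
  simp only [Nat.Ioc_filter_dvd_card_eq_div] at h2
  have e1 : countIn (setOfMultiples A) x =
      ((Finset.Icc 1 x).filter (fun n => n ∈ setOfMultiples A)).card := by
    unfold countIn; congr
  have e2 : hrC F x = ((Finset.Ico 1 (x + 1)).filter (fun n => ∀ b ∈ F, ¬ b ∣ n)).card := by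
    unfold hrC; congr
  have h4 : countIn (setOfMultiples A) x + hrC F x ≤ x + ∑ g ∈ G, x / g := by
    rw [e1, e2]; omega
  have h5 : (countIn (setOfMultiples A) x : ℝ) + hrC F x ≤ x + ∑ g ∈ G, ((x / g : ℕ) : ℝ) := by
    exact_mod_cast h4
  have h6 : ∑ g ∈ G, ((x / g : ℕ) : ℝ) ≤ x * ∑ g ∈ G, 1 / (g : ℝ) := by
    rw [Finset.mul_sum]
    refine Finset.sum_le_sum fun g _ => ?_
    rw [mul_one_div]
    exact Nat.cast_div_le
  have h7 := hT G (fun g hg => by simp [hG] at hg; exact hg.2.1) (by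
    rw [Finset.disjoint_left]
    intro b hb hb'
    simp [hG] at hb'
    exact hb'.2.2 hb)
  nlinarith [mul_le_mul_of_nonneg_left h7 (Nat.cast_nonneg (α := ℝ) x)]

lemma hr_finite (A : Set ℕ) (δ : ℝ) (h : HasDensity (setOfMultiples A) δ)
    (F : Finset ℕ) (hF : ∀ b ∈ F, 0 < b) (T : ℝ)
    (hT : ∀ G : Finset ℕ, (∀ g ∈ G, g ∈ A) → Disjoint F G → ∑ g ∈ G, 1 / (g : ℝ) ≤ T) :
    δ ≤ 1 - ∏ b ∈ F, (1 - 1 / (b : ℝ)) + T := by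
  have hL : 0 < ∏ b ∈ F, b := Finset.prod_pos hF
  have ht : Tendsto (fun k : ℕ => (∏ b ∈ F, b) * k) atTop atTop :=
    tendsto_id.const_mul_atTop' hL
  refine le_of_tendsto (h.comp ht) ?_
  filter_upwards [eventually_gt_atTop 0] with k hk
  have hx : 0 < (∏ b ∈ F, b) * k := Nat.mul_pos hL hk
  have h1 := hrC_ge F hF _ (Dvd.intro k rfl)
  have h2 := hr_count A F ((∏ b ∈ F, b) * k) T hT
  simp only [Function.comp]
  generalize (∏ b ∈ F, b) * k = x at *
  have hx' : (0 : ℝ) < x := by exact_mod_cast hx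
  rw [div_le_iff₀ hx']
  linarith

lemma hr_le_one (A : Set ℕ) (δ : ℝ) (h : HasDensity A δ) : δ ≤ 1 := by
  classical
  refine le_of_tendsto' h fun x => ?_
  refine div_le_one_of_le₀ ?_ (Nat.cast_nonneg _)
  have : countIn A x ≤ x := by
    unfold countIn
    exact (Finset.card_filter_le _ _).trans (by simp)
  exact_mod_cast this

lemma hr_fac (a : ℕ) : 0 ≤ 1 - 1 / (a : ℝ) ∧ 1 - 1 / (a : ℝ) ≤ 1 := by
  have h0 : 0 ≤ 1 / (a : ℝ) := by positivity
  have h1 : 1 / (a : ℝ) ≤ 1 := by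
    rcases Nat.eq_zero_or_pos a with rfl | ha
    · simp
    · rw [div_le_one (by positivity)]; exact_mod_cast ha
  constructor <;> linarith

/-- (Heilbronn–Rohrbach) Whenever the set of multiples of `A` has an asymptotic
density `δ`, one has `δ ≤ 1 - ∏_{a ∈ A} (1 - 1/a)`. -/
theorem density_setOfMultiples_le (A : Set ℕ) (δ : ℝ)
    (h : HasDensity (setOfMultiples A) δ) :
    δ ≤ 1 - ∏' a : A, (1 - 1 / (a : ℝ)) := by
  classical
  have hanti : Antitone (fun s : Finset A => ∏ a ∈ s, (1 - 1 / ((a : ℕ) : ℝ))) := by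
    intro s t hst
    show ∏ a ∈ t, (1 - 1 / ((a : ℕ) : ℝ)) ≤ ∏ a ∈ s, (1 - 1 / ((a : ℕ) : ℝ))
    rw [← Finset.prod_sdiff hst]
    exact mul_le_of_le_one_left (Finset.prod_nonneg fun a _ => (hr_fac a).1)
      (Finset.prod_le_one (fun a _ => (hr_fac a).1) (fun a _ => (hr_fac a).2))
  have hbdd : BddBelow (Set.range (fun s : Finset A => ∏ a ∈ s, (1 - 1 / ((a : ℕ) : ℝ)))) := by
    refine ⟨0, ?_⟩
    rintro _ ⟨s, rfl⟩
    exact Finset.prod_nonneg fun a _ => (hr_fac a).1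
  have hprod : HasProd (fun a : A => 1 - 1 / ((a : ℕ) : ℝ))
      (⨅ s : Finset A, ∏ a ∈ s, (1 - 1 / ((a : ℕ) : ℝ))) := by
    exact tendsto_atTop_ciInf hanti hbdd
  rw [hprod.tprod_eq]
  set P := ⨅ s : Finset A, ∏ a ∈ s, (1 - 1 / ((a : ℕ) : ℝ)) with hP
  have hPle : ∀ s : Finset A, P ≤ ∏ a ∈ s, (1 - 1 / ((a : ℕ) : ℝ)) := fun s => ciInf_le hbdd s
  have hP0 : 0 ≤ P := le_ciInf fun s => Finset.prod_nonneg fun a _ => (hr_fac a).1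
  rcases hP0.eq_or_lt with h0 | hpos
  · rw [← h0, sub_zero]; exact hr_le_one _ _ h
  have hsum : Summable (fun a : A => 1 / ((a : ℕ) : ℝ)) := by
    refine summable_of_sum_le (c := -Real.log P) (fun a => by positivity) fun s => ?_
    have h1 : P ≤ Real.exp (-∑ a ∈ s, 1 / ((a : ℕ) : ℝ)) := by
      refine (hPle s).trans ?_
      rw [← Finset.sum_neg_distrib, Real.exp_sum]
      refine Finset.prod_le_prod (fun a _ => (hr_fac a).1) fun a _ => ?_
      exact Real.one_sub_le_exp_neg _
    have h2 := (Real.log_le_iff_le_exp hpos).2 h1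
    linarith
  refine le_of_forall_pos_le_add fun ε hε => ?_
  obtain ⟨s, hs⟩ := (hsum.hasSum.eventually (lt_mem_nhds (sub_lt_self _ hε))).exists
  set F := (s.map (Function.Embedding.subtype _)).erase 0 with hF
  have hprodF : ∏ b ∈ F, (1 - 1 / (b : ℝ)) = ∏ a ∈ s, (1 - 1 / ((a : ℕ) : ℝ)) := by
    rw [hF, Finset.prod_erase _ (by simp), Finset.prod_map]; rfl
  have hmain := hr_finite A δ h F (fun b hb => Nat.pos_of_ne_zero (Finset.ne_of_mem_erase hb)) ε ?_
  · rw [hprodF] at hmain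
    linarith [hPle s]
  intro G hGA hd
  have hGF : ∑ b ∈ F, 1 / (b : ℝ) = ∑ a ∈ s, 1 / ((a : ℕ) : ℝ) := by
    rw [hF, Finset.sum_erase _ (by simp), Finset.sum_map]; rfl
  have hmem : ∀ b ∈ F ∪ G, b ∈ A := by
    intro b hb
    rcases Finset.mem_union.1 hb with hb | hb
    · have := Finset.mem_of_mem_erase hb
      simp at this
      exact this.1
    · exact hGA b hb
  have htot : ∑ b ∈ F ∪ G, 1 / (b : ℝ) ≤ ∑' a : A, 1 / ((a : ℕ) : ℝ) := by
    have e := Finset.sum_subtype_of_mem (fun b : ℕ => 1 / (b : ℝ)) (p := fun b => b ∈ A) hmem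
    rw [← e]
    exact hsum.sum_le_tsum _ (fun a _ => by positivity)
  rw [Finset.sum_union hd, hGF] at htot
  linarith
end

section
/- For each natural number P, the set of squarefree positive integers that are relatively prime to P possesses an asymptotic density, equal to (6/π²)·∏_{p ∣ P} (1 + 1/p)^{-1}, where the product runs over the distinct primes p dividing P. -/
open Filter

open ArithmeticFunction in
lemma sf_indicator (n : ℕ) (hn : 0 < n) (x : ℕ) (hx : n ≤ x) :
    ∑ d ∈ Finset.Icc 1 x, (if d ^ 2 ∣ n then (moebius d : ℝ) else 0)
      = if Squarefree n then 1 else 0 := by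
  obtain ⟨a, b, ha, hb, hab, hsq⟩ := Nat.sq_mul_squarefree_of_pos hn
  have key : ∀ d, d ^ 2 ∣ n ↔ d ∣ b := by
    intro d
    rw [← hab]
    constructor
    · intro h
      rw [← Nat.factorization_le_iff_dvd (by rintro rfl; simp at h; omega) hb.ne']
      rw [← Nat.factorization_le_iff_dvd (by rintro h0; rw [h0] at h; simp at h; omega)
        (by positivity)] at h
      intro p
      have h1 := h p
      have h2 := hsq.natFactorization_le_one p
      rw [Nat.factorization_mul (by positivity) ha.ne', Nat.factorization_pow,
        Nat.factorization_pow] at h1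
      simp at h1
      omega
    · intro h
      exact (pow_dvd_pow_of_dvd h 2).mul_right a
  have hbx : b ≤ x := by nlinarith
  have h1 : ∑ d ∈ Finset.Icc 1 x, (if d ^ 2 ∣ n then (moebius d : ℝ) else 0)
      = ∑ d ∈ b.divisors, (moebius d : ℝ) := by
    rw [← Finset.sum_filter]
    apply Finset.sum_congr _ (fun _ _ => rfl)
    ext d
    simp only [Finset.mem_filter, Finset.mem_Icc, Nat.mem_divisors, key]
    constructor
    · rintro ⟨_, h⟩; exact ⟨h, hb.ne'⟩
    · rintro ⟨h, _⟩
      exact ⟨⟨Nat.pos_of_dvd_of_pos h hb, (Nat.le_of_dvd hb h).trans hbx⟩, h⟩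
  have h2 : ∑ d ∈ b.divisors, (moebius d : ℤ) = if b = 1 then 1 else 0 := by
    rw [← coe_mul_zeta_apply, moebius_mul_coe_zeta, one_apply]
  have h3 : Squarefree n ↔ b = 1 := by
    constructor
    · intro h
      have := h b (by rw [← hab, sq]; exact dvd_mul_right _ _)
      simpa using this
    · rintro rfl
      rw [← hab]; simpa using hsq
  rw [h1]
  have h4 := congrArg (Int.cast : ℤ → ℝ) h2
  push_cast at h4
  rw [h4]
  simp [h3]

/-- number of integers in `[1,x]` coprime to `P` -/
def copCount (P x : ℕ) : ℕ := ((Finset.Icc 1 x).filter (fun n => P.Coprime n)).card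

lemma copCount_le (P x : ℕ) : copCount P x ≤ x := by
  unfold copCount
  exact (Finset.card_filter_le _ _).trans (by simp)

lemma copCount_add (P x : ℕ) : copCount P (x + P) = copCount P x + P.totient := by
  unfold copCount
  rw [← Nat.filter_coprime_Ico_eq_totient P (x + 1), ← Finset.card_union_of_disjoint,
    ← Finset.filter_union]
  · congr 2
    ext n
    simp only [Finset.mem_Icc, Finset.mem_union, Finset.mem_Ico]
    omega
  · apply Finset.disjoint_filter_filter
    rw [Finset.disjoint_left]
    intro n
    simp only [Finset.mem_Icc, Finset.mem_Ico]
    omega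

lemma copCount_add_mul (P r q : ℕ) : copCount P (r + P * q) = copCount P r + q * P.totient := by
  induction q with
  | zero => simp
  | succ q ih =>
    rw [mul_add, mul_one, ← add_assoc, copCount_add, ih]; ring

lemma copCount_bound (P : ℕ) (hP : 0 < P) (y : ℕ) :
    |(copCount P y : ℝ) - P.totient / P * y| ≤ P := by
  have hP' : (0 : ℝ) < P := by exact_mod_cast hP
  have h := copCount_add_mul P (y % P) (y / P)
  have hy := Nat.mod_add_div y P
  have hr := Nat.mod_lt y hP
  rw [hy] at h
  have hyr : (y : ℝ) = (y % P : ℕ) + P * (y / P : ℕ) := by exact_mod_cast hy.symm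
  have e : (copCount P y : ℝ) - P.totient / P * y
      = copCount P (y % P) - P.totient / P * (y % P : ℕ) := by
    rw [h, hyr]; push_cast; field_simp; ring
  rw [e]
  have h1 : (copCount P (y % P) : ℝ) ≤ P := by
    exact_mod_cast (copCount_le _ _).trans hr.le
  have h2 : (P.totient / P : ℝ) ≤ 1 := by
    rw [div_le_one hP']; exact_mod_cast Nat.totient_le P
  have h3 : ((y % P : ℕ) : ℝ) ≤ P := by exact_mod_cast hr.le
  have h4 : (P.totient / P : ℝ) * (y % P : ℕ) ≤ P := by
    calc _ ≤ 1 * (P : ℝ) := by gcongr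
      _ = P := one_mul _
  have h5 : 0 ≤ (P.totient / P : ℝ) * (y % P : ℕ) := by positivity
  have h6 : (0 : ℝ) ≤ copCount P (y % P) := by positivity
  rw [abs_le]; constructor <;> linarith

lemma tendsto_of_bound (a : ℕ → ℝ) (c K : ℝ) (h : ∀ x : ℕ, |a x - c * x| ≤ K) :
    Tendsto (fun x : ℕ => a x / x) atTop (nhds c) := by
  rw [tendsto_iff_norm_sub_tendsto_zero]
  apply squeeze_zero' (g := fun x : ℕ => K / (x : ℝ)) (Eventually.of_forall fun _ => norm_nonneg _)
  · filter_upwards [eventually_gt_atTop 0] with x hx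
    have hx' : (0 : ℝ) < x := by exact_mod_cast hx
    rw [Real.norm_eq_abs, show a x / x - c = (a x - c * x) / x by field_simp, abs_div,
      abs_of_pos hx']
    gcongr
    exact h x
  · exact tendsto_const_div_atTop_nhds_zero_nat K

lemma copCount_div_tendsto (P : ℕ) (hP : 0 < P) (k : ℕ) (hk : 0 < k) :
    Tendsto (fun x : ℕ => (copCount P (x / k) : ℝ) / x) atTop
      (nhds (P.totient / P * (1 / k))) := by
  apply tendsto_of_bound (fun x => (copCount P (x / k) : ℝ)) _ (P + 1)
  intro x
  have hP' : (0 : ℝ) < P := by exact_mod_cast hP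
  have hk' : (0 : ℝ) < k := by exact_mod_cast hk
  have h1 := copCount_bound P hP (x / k)
  have h2 : (P.totient / P : ℝ) ≤ 1 := by
    rw [div_le_one hP']; exact_mod_cast Nat.totient_le P
  have h2' : (0 : ℝ) ≤ (P.totient / P : ℝ) := by positivity
  have h3 : ((x / k : ℕ) : ℝ) ≤ x / k := Nat.cast_div_le
  have h4 : (x : ℝ) / k ≤ (x / k : ℕ) + 1 := by
    rw [div_le_iff₀ hk']
    have := (Nat.lt_mul_div_succ x hk).le
    have h : (x : ℝ) ≤ k * ((x / k : ℕ) + 1) := by exact_mod_cast this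
    linarith
  rw [show (P.totient / P * (1 / k) * x : ℝ) = P.totient / P * (x / k) by ring]
  rw [abs_le] at h1 ⊢
  constructor <;> nlinarith

lemma count_dvd (P d x : ℕ) (hd : 0 < d) :
    ((Finset.Icc 1 x).filter (fun n => P.Coprime n ∧ d ^ 2 ∣ n)).card
      = if P.Coprime d then copCount P (x / d ^ 2) else 0 := by
  split_ifs with h
  · unfold copCount
    symm
    apply Finset.card_bij (fun m _ => d ^ 2 * m)
    · intro m hm
      simp only [Finset.mem_filter, Finset.mem_Icc] at hm ⊢
      refine ⟨⟨Nat.mul_pos (by positivity) hm.1.1, ?_⟩, ?_, dvd_mul_right _ _⟩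
      · exact (Nat.mul_le_mul_left _ hm.1.2).trans (Nat.mul_div_le _ _)
      · exact Nat.Coprime.mul_right (h.pow_right 2) hm.2
    · intro a _ b _ hab
      exact Nat.eq_of_mul_eq_mul_left (by positivity) hab
    · intro n hn
      simp only [Finset.mem_filter, Finset.mem_Icc] at hn
      obtain ⟨⟨h1, h2⟩, h3, m, rfl⟩ := hn
      refine ⟨m, ?_, rfl⟩
      simp only [Finset.mem_filter, Finset.mem_Icc]
      refine ⟨⟨Nat.pos_of_mul_pos_left h1, ?_⟩, h3.coprime_mul_left_right⟩
      rw [Nat.le_div_iff_mul_le (by positivity), mul_comm]; exact h2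
  · rw [Finset.card_eq_zero, Finset.filter_eq_empty_iff]
    rintro n - ⟨h1, h2⟩
    exact h (h1.coprime_dvd_right ((dvd_pow_self d two_ne_zero).trans h2))

open ArithmeticFunction in
/-- the arithmetic weight -/
noncomputable def wt (P d : ℕ) : ℝ := if P.Coprime d then (moebius d : ℝ) else 0

lemma wt_abs (P d : ℕ) : |wt P d| ≤ 1 := by
  unfold wt
  split_ifs
  · exact_mod_cast ArithmeticFunction.abs_moebius_le_one
  · simp

open ArithmeticFunction in
lemma count_eq (P x : ℕ) :
    (countIn {n : ℕ | Squarefree n ∧ Nat.Coprime n P} x : ℝ)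
      = ∑' d : ℕ, wt P d * copCount P (x / d ^ 2) := by
  classical
  have h0 : (countIn {n : ℕ | Squarefree n ∧ Nat.Coprime n P} x : ℝ)
      = ∑ n ∈ (Finset.Icc 1 x).filter (fun n => P.Coprime n),
          if Squarefree n then (1 : ℝ) else 0 := by
    unfold countIn
    rw [← Finset.sum_filter, Finset.filter_filter, Finset.sum_const, nsmul_eq_mul, mul_one]
    norm_cast
    apply congrArg
    ext n
    simp [and_comm, Nat.coprime_comm]
  rw [h0, tsum_eq_sum (s := Finset.Icc 1 x)]
  · have : ∀ n ∈ (Finset.Icc 1 x).filter (fun n => P.Coprime n),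
        (if Squarefree n then (1 : ℝ) else 0)
        = ∑ d ∈ Finset.Icc 1 x, (if d ^ 2 ∣ n then (moebius d : ℝ) else 0) := by
      intro n hn
      simp only [Finset.mem_filter, Finset.mem_Icc] at hn
      rw [sf_indicator n hn.1.1 x hn.1.2]
    rw [Finset.sum_congr rfl this, Finset.sum_comm]
    apply Finset.sum_congr rfl
    intro d hd
    simp only [Finset.mem_Icc] at hd
    rw [← Finset.sum_filter, Finset.filter_filter, Finset.sum_const, count_dvd P d x hd.1,
      nsmul_eq_mul]
    unfold wt
    split_ifs <;> simp [mul_comm]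
  · intro d hd
    simp only [Finset.mem_Icc, not_and_or, not_le] at hd
    rcases hd with hd | hd
    · have : d = 0 := by omega
      subst this
      simp [wt]
    · have : x / d ^ 2 = 0 := Nat.div_eq_of_lt (by nlinarith)
      rw [this]
      simp [copCount]

open ArithmeticFunction DirichletCharacter in
lemma wt_sum (P : ℕ) (hP : 0 < P) :
    (∑' d : ℕ, wt P d * (1 / (d : ℝ) ^ 2)) *
      ((∏ p ∈ P.primeFactors, (1 - 1 / (p : ℝ) ^ 2)) * (Real.pi ^ 2 / 6)) = 1 := by
  have : NeZero P := ⟨hP.ne'⟩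
  have hs : (1 : ℝ) < (2 : ℂ).re := by norm_num
  have h1 := LSeries.mul_mu_eq_one (1 : DirichletCharacter ℂ P) hs
  rw [← LFunction_eq_LSeries _ hs] at h1
  have h2 := LFunctionTrivChar_eq_mul_riemannZeta (N := P) (s := 2) (by norm_num)
  unfold LFunctionTrivChar at h2
  rw [h2, riemannZeta_two] at h1
  have h3 : LSeries ((fun n : ℕ => (1 : DirichletCharacter ℂ P) n) * fun n : ℕ => ((moebius n : ℤ) : ℂ)) 2
      = ((∑' d : ℕ, wt P d * (1 / (d : ℝ) ^ 2) : ℝ) : ℂ) := by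
    rw [Complex.ofReal_tsum]
    unfold LSeries
    apply tsum_congr
    intro d
    rcases eq_or_ne d 0 with rfl | hd
    · simp
    rw [LSeries.term_of_ne_zero hd]
    have hc : ((d : ℂ) ^ (2 : ℂ)) = (d : ℂ) ^ 2 := by
      exact_mod_cast Complex.cpow_natCast (d : ℂ) 2
    rw [hc]
    unfold wt
    by_cases h : P.Coprime d
    · have hu : IsUnit (d : ZMod P) := (ZMod.isUnit_iff_coprime d P).2 h.symm
      rw [if_pos h]
      simp [MulChar.one_apply hu, div_eq_mul_inv]
    · have hu : ¬ IsUnit (d : ZMod P) := fun hu => h ((ZMod.isUnit_iff_coprime d P).1 hu).symm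
      simp [h, MulChar.map_nonunit _ hu]
  rw [h3] at h1
  have h4 : (∏ p ∈ P.primeFactors, (1 - (p : ℂ) ^ (-2 : ℂ)))
      = ((∏ p ∈ P.primeFactors, (1 - 1 / (p : ℝ) ^ 2) : ℝ) : ℂ) := by
    push_cast
    apply Finset.prod_congr rfl
    intro p _
    have hc : ((p : ℂ) ^ (2 : ℂ)) = (p : ℂ) ^ 2 := by
      exact_mod_cast Complex.cpow_natCast (p : ℂ) 2
    rw [Complex.cpow_neg, hc, one_div]
  rw [h4] at h1
  rw [mul_comm]
  exact_mod_cast h1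

lemma totient_div (P : ℕ) (hP : 0 < P) :
    (P.totient / P : ℝ) = ∏ p ∈ P.primeFactors, (1 - 1 / (p : ℝ)) := by
  have hP' : (P : ℝ) ≠ 0 := by exact_mod_cast hP.ne'
  have h := congrArg (Rat.cast : ℚ → ℝ) (Nat.totient_eq_mul_prod_factors P)
  push_cast at h
  rw [h]
  simp [hP']

/-- The squarefree integers coprime to `P` have asymptotic density
`(6/π²) ∏_{p ∣ P} (1 + 1/p)⁻¹`. -/
theorem squarefree_coprime_density (P : ℕ) (hP : 0 < P) :
    HasDensity {n : ℕ | Squarefree n ∧ Nat.Coprime n P}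
      (6 / Real.pi ^ 2 * ∏ p ∈ P.primeFactors, (1 + 1 / (p : ℝ))⁻¹) := by
  have hlim : Tendsto (fun x : ℕ => ∑' d : ℕ, wt P d * ((copCount P (x / d ^ 2) : ℝ) / x)) atTop
      (nhds (∑' d : ℕ, wt P d * (P.totient / P * (1 / (d : ℝ) ^ 2)))) := by
    apply tendsto_tsum_of_dominated_convergence (bound := fun d : ℕ => 1 / (d : ℝ) ^ 2)
    · exact Real.summable_one_div_nat_pow.2 one_lt_two
    · intro d
      rcases Nat.eq_zero_or_pos d with rfl | hd
      · simp [wt]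
      · have := (copCount_div_tendsto P hP (d ^ 2) (by positivity)).const_mul (wt P d)
        exact_mod_cast this
    · filter_upwards [eventually_gt_atTop 0] with x hx d
      have hx' : (0 : ℝ) < x := by exact_mod_cast hx
      rcases Nat.eq_zero_or_pos d with rfl | hd
      · simp [wt]
      have hd' : (0 : ℝ) < d := by exact_mod_cast hd
      rw [norm_mul, Real.norm_eq_abs, Real.norm_eq_abs, abs_of_nonneg (a := _ / _) (by positivity)]
      have h1 : (copCount P (x / d ^ 2) : ℝ) ≤ x / (d : ℝ) ^ 2 := by
        calc (copCount P (x / d ^ 2) : ℝ) ≤ ((x / d ^ 2 : ℕ) : ℝ) := by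
              exact_mod_cast copCount_le _ _
          _ ≤ (x : ℝ) / ((d ^ 2 : ℕ) : ℝ) := Nat.cast_div_le
          _ = _ := by push_cast; rfl
      calc |wt P d| * ((copCount P (x / d ^ 2) : ℝ) / x)
          ≤ 1 * ((x / (d : ℝ) ^ 2) / x) := by
            gcongr
            exact wt_abs P d
        _ = 1 / (d : ℝ) ^ 2 := by field_simp
  unfold HasDensity
  have hval : ∑' d : ℕ, wt P d * (P.totient / P * (1 / (d : ℝ) ^ 2))
      = 6 / Real.pi ^ 2 * ∏ p ∈ P.primeFactors, (1 + 1 / (p : ℝ))⁻¹ := by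
    simp_rw [mul_left_comm (wt P _)]
    rw [tsum_mul_left]
    have hw := wt_sum P hP
    set S := ∑' d : ℕ, wt P d * (1 / (d : ℝ) ^ 2)
    have hfac : ∏ p ∈ P.primeFactors, (1 - 1 / (p : ℝ) ^ 2)
        = (∏ p ∈ P.primeFactors, (1 - 1 / (p : ℝ))) * ∏ p ∈ P.primeFactors, (1 + 1 / (p : ℝ)) := by
      rw [← Finset.prod_mul_distrib]
      apply Finset.prod_congr rfl
      intro p _
      ring
    rw [hfac, ← totient_div P hP] at hw
    rw [Finset.prod_inv_distrib]
    have hB : (∏ p ∈ P.primeFactors, (1 + 1 / (p : ℝ))) ≠ 0 :=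
      Finset.prod_ne_zero_iff.2 fun p _ => by positivity
    set B := ∏ p ∈ P.primeFactors, (1 + 1 / (p : ℝ))
    set A : ℝ := P.totient / P
    have hpi : Real.pi ≠ 0 := Real.pi_ne_zero
    field_simp
    linarith
  rw [← hval]
  refine hlim.congr fun x => ?_
  rw [count_eq, ← tsum_div_const]
  simp_rw [mul_div_assoc]
end

section
/- Let (f,g) be a Möbius pair of complex-valued arithmetic functions, not both identically zero. If the support of g is evaporating, then the support of f possesses a positive asymptotic density. -/
open Filter

/-- The upper (asymptotic) density of `A ⊆ ℕ`. -/
noncomputable def upperDensity (A : Set ℕ) : ℝ :=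
  limsup (fun x : ℕ => (countIn A x : ℝ) / x) atTop

/-- `A` is evaporating: the upper density of the set of `n` with a divisor in
`A ∩ [T,∞)` tends to `0` as `T → ∞`. -/
def Evaporating (A : Set ℕ) : Prop :=
  Tendsto (fun T : ℕ => upperDensity {n : ℕ | 0 < n ∧ ∃ a ∈ A, T ≤ a ∧ a ∣ n})
    atTop (nhds 0)

lemma aux_countIn_le {X Y E : Set ℕ} (h : ∀ n, 0 < n → n ∈ X → n ∈ Y ∨ n ∈ E) (x : ℕ) :
    countIn X x ≤ countIn Y x + countIn E x := by
  classical
  unfold countIn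
  refine le_trans (Finset.card_le_card ?_) (Finset.card_union_le _ _)
  intro n hn
  simp only [Finset.mem_filter, Finset.mem_union, Finset.mem_Icc] at hn ⊢
  rcases h n (by omega) hn.2 with h1 | h1
  · exact Or.inl ⟨hn.1, h1⟩
  · exact Or.inr ⟨hn.1, h1⟩

lemma aux_countIn_le_self (X : Set ℕ) (x : ℕ) : countIn X x ≤ x := by
  classical
  unfold countIn
  refine le_trans (Finset.card_filter_le _ _) (by simp)

/-- Counting along a dilation: if `k ∈ X` implies `m * k ∈ Y`. -/
lemma aux_countIn_dilate {X Y : Set ℕ} {m x y : ℕ} (hm : 0 < m)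
    (h : ∀ k, 0 < k → k ∈ X → m * k ∈ Y) (hxy : m * x ≤ y) :
    countIn X x ≤ countIn Y y := by
  classical
  unfold countIn
  refine Finset.card_le_card_of_injOn (fun k => m * k) ?_ ?_
  · intro k hk
    simp only [Finset.coe_filter, Finset.mem_Icc, Set.mem_setOf_eq] at hk ⊢
    refine ⟨⟨Nat.mul_pos hm (by omega), le_trans (Nat.mul_le_mul_left m hk.1.2) hxy⟩,
      h k (by omega) hk.2⟩
  · intro a _ b _ hab
    exact Nat.eq_of_mul_eq_mul_left hm hab

lemma aux_countIn_succ (X : Set ℕ) (x : ℕ) [Decidable (x + 1 ∈ X)] :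
    countIn X (x + 1) = countIn X x + if x + 1 ∈ X then 1 else 0 := by
  classical
  unfold countIn
  rw [← Finset.insert_Icc_right_eq_Icc_add_one (by omega), Finset.filter_insert]
  split_ifs with h
  · rw [Finset.card_insert_of_notMem (by simp)]
  · simp

lemma aux_countIn_add {Y : Set ℕ} {L : ℕ} (hY : ∀ n, 0 < n → (n + L ∈ Y ↔ n ∈ Y)) (x : ℕ) :
    countIn Y (x + L) = countIn Y x + countIn Y L := by
  classical
  induction x with
  | zero => simp [countIn]
  | succ x ih =>
    rw [aux_countIn_succ, show x + 1 + L = (x + L) + 1 by ring, aux_countIn_succ, ih]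
    have := hY (x + 1) (by omega)
    rw [show x + 1 + L = (x + L) + 1 by ring] at this
    simp only [this]
    ring

lemma aux_periodic {Y : Set ℕ} {L : ℕ} (hL : 0 < L)
    (hY : ∀ n, 0 < n → (n + L ∈ Y ↔ n ∈ Y)) : ∃ δ, HasDensity Y δ := by
  refine ⟨(countIn Y L : ℝ) / L, ?_⟩
  have hL' : (L : ℝ) ≠ 0 := by positivity
  set h : ℕ → ℝ := fun x => (countIn Y x : ℝ) - x * ((countIn Y L : ℝ) / L) with hh
  have hper : Function.Periodic h L := by
    intro x
    simp only [hh, aux_countIn_add hY x]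
    push_cast
    field_simp
    ring
  have hb : ∀ x, |h x| ≤ ∑ i ∈ Finset.range L, |h i| := by
    intro x
    rw [← hper.map_mod_nat x]
    exact Finset.single_le_sum (f := fun i => |h i|) (fun i _ => abs_nonneg _)
      (Finset.mem_range.2 (Nat.mod_lt _ hL))
  have h0 : Tendsto (fun x : ℕ => h x / x) atTop (nhds 0) := by
    have hC := tendsto_const_div_atTop_nhds_zero_nat (∑ i ∈ Finset.range L, |h i|)
    refine squeeze_zero_norm (fun x => ?_) hC
    rw [norm_div, Real.norm_eq_abs, Real.norm_natCast]
    exact div_le_div_of_nonneg_right (hb x) (by positivity)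
  have h1 := h0.add_const ((countIn Y L : ℝ) / L)
  rw [zero_add] at h1
  unfold HasDensity
  refine h1.congr' ?_
  filter_upwards [eventually_gt_atTop 0] with x hx
  have hx' : (x : ℝ) ≠ 0 := by positivity
  simp only [hh]
  field_simp
  ring

lemma aux_approx {X : Set ℕ}
    (h : ∀ ε : ℝ, 0 < ε → ∃ Y E : Set ℕ, (∃ L, 0 < L ∧ ∀ n, 0 < n → (n + L ∈ Y ↔ n ∈ Y)) ∧
      (∀ n, 0 < n → n ∉ E → (n ∈ X ↔ n ∈ Y)) ∧
      ∀ᶠ x : ℕ in atTop, (countIn E x : ℝ) ≤ ε * x) : ∃ δ, HasDensity X δ := by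
  unfold HasDensity
  refine cauchySeq_tendsto_of_complete ?_
  rw [Metric.cauchySeq_iff']
  intro ε hε
  obtain ⟨Y, E, ⟨L, hL, hY⟩, hXY, hE⟩ := h (ε / 8) (by positivity)
  obtain ⟨δ, hδ⟩ := aux_periodic hL hY
  have h1 := (Metric.tendsto_nhds.1 hδ) (ε / 8) (by positivity)
  have key : ∀ᶠ x : ℕ in atTop, |(countIn X x : ℝ) / x - δ| < ε / 2 := by
    filter_upwards [h1, hE, eventually_gt_atTop 0] with x hx1 hx2 hx0
    have hx' : (0 : ℝ) < x := by positivity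
    have a1 : (countIn X x : ℝ) ≤ countIn Y x + countIn E x := by
      exact_mod_cast aux_countIn_le (fun n hn hnX => by
        by_cases hnE : n ∈ E
        · exact Or.inr hnE
        · exact Or.inl ((hXY n hn hnE).1 hnX)) x
    have a2 : (countIn Y x : ℝ) ≤ countIn X x + countIn E x := by
      exact_mod_cast aux_countIn_le (fun n hn hnX => by
        by_cases hnE : n ∈ E
        · exact Or.inr hnE
        · exact Or.inl ((hXY n hn hnE).2 hnX)) x
    have b1 : (countIn X x : ℝ) / x ≤ countIn Y x / x + ε / 8 := by
      rw [div_add' _ _ _ hx'.ne']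
      exact div_le_div_of_nonneg_right (by linarith) hx'.le
    have b2 : (countIn Y x : ℝ) / x ≤ countIn X x / x + ε / 8 := by
      rw [div_add' _ _ _ hx'.ne']
      exact div_le_div_of_nonneg_right (by linarith) hx'.le
    rw [Real.dist_eq, abs_lt] at hx1
    rw [abs_lt]
    constructor <;> linarith [hx1.1, hx1.2]
  obtain ⟨N, hN⟩ := eventually_atTop.1 key
  refine ⟨N, fun n hn => ?_⟩
  have c1 := abs_lt.1 (hN n hn)
  have c2 := abs_lt.1 (hN N le_rfl)
  rw [Real.dist_eq, abs_lt]
  constructor <;> linarith [c1.1, c1.2, c2.1, c2.2]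

/-- Multiples of elements of `A` that are at least `T`. -/
def auxMult (A : Set ℕ) (T : ℕ) : Set ℕ := {n : ℕ | 0 < n ∧ ∃ a ∈ A, T ≤ a ∧ a ∣ n}

/-- Epsilon form of evaporation. -/
def auxEvap (A : Set ℕ) : Prop :=
  ∀ ε : ℝ, 0 < ε → ∃ T : ℕ, ∀ᶠ x : ℕ in atTop, (countIn (auxMult A T) x : ℝ) ≤ ε * x

lemma aux_evap_of {A : Set ℕ} (h : Evaporating A) : auxEvap A := by
  intro ε hε
  obtain ⟨T, hT⟩ := (h.eventually_lt_const hε).exists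
  refine ⟨T, ?_⟩
  have hb : IsBoundedUnder (· ≤ ·) atTop
      (fun x : ℕ => (countIn (auxMult A T) x : ℝ) / x) := by
    refine isBoundedUnder_of ⟨1, fun x => ?_⟩
    refine div_le_one_of_le₀ ?_ (by positivity)
    exact_mod_cast aux_countIn_le_self _ x
  have := eventually_lt_of_limsup_lt (f := atTop)
    (u := fun x : ℕ => (countIn (auxMult A T) x : ℝ) / x) (b := ε) hT hb
  filter_upwards [this, eventually_gt_atTop 0] with x hx hx0
  have hx' : (0 : ℝ) < x := by positivity
  exact ((div_lt_iff₀ hx').1 hx).le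

lemma aux_dvd_add {d U n : ℕ} (h0 : 0 < d) (h : d < U) : d ∣ n + U.factorial ↔ d ∣ n :=
  (Nat.dvd_add_left (Nat.dvd_factorial h0 h.le))

/-- Non-multiples. -/
def auxNon (B : Set ℕ) (T : ℕ) : Set ℕ := {n : ℕ | ∀ b ∈ B, T ≤ b → ¬ b ∣ n}

lemma aux_non_density {B : Set ℕ} (hB : auxEvap B) (T : ℕ) : ∃ δ, HasDensity (auxNon B T) δ := by
  refine aux_approx fun ε hε => ?_
  obtain ⟨U, hU⟩ := hB ε hε
  refine ⟨{n : ℕ | ∀ b ∈ B, T ≤ b → 0 < b → b < U → ¬ b ∣ n}, auxMult B U,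
    ⟨U.factorial, U.factorial_pos, ?_⟩, ?_, hU⟩
  · intro n hn
    simp only [Set.mem_setOf_eq]
    constructor
    · intro h b hb hT h0 hbU hd
      exact h b hb hT h0 hbU ((aux_dvd_add h0 hbU).2 hd)
    · intro h b hb hT h0 hbU hd
      exact h b hb hT h0 hbU ((aux_dvd_add h0 hbU).1 hd)
  · intro n hn hnE
    simp only [Set.mem_setOf_eq, auxNon]
    constructor
    · intro h b hb hT _ _
      exact h b hb hT
    · intro h b hb hT hd
      by_cases hbU : b < U
      · exact h b hb hT (Nat.pos_of_dvd_of_pos hd hn) hbU hd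
      · exact hnE ⟨hn, b, hb, by omega, hd⟩

/-- The dilated density: `countIn X (x / b) / x → δ / b`. -/
lemma aux_dilate_tendsto {X : Set ℕ} {δ : ℝ} (h : HasDensity X δ) {b : ℕ} (hb : 0 < b) :
    Tendsto (fun x : ℕ => (countIn X (x / b) : ℝ) / x) atTop (nhds (δ / b)) := by
  have h1 : Tendsto (fun x : ℕ => (countIn X (x / b) : ℝ) / ((x / b : ℕ) : ℝ)) atTop (nhds δ) :=
    h.comp (Nat.tendsto_div_const_atTop hb.ne')
  have h2 : Tendsto (fun x : ℕ => ((x / b : ℕ) : ℝ) / x) atTop (nhds (1 / b)) := by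
    have h3 := (tendsto_nat_floor_mul_div_atTop (R := ℝ) (a := 1 / (b : ℝ))
      (by positivity)).comp tendsto_natCast_atTop_atTop
    refine h3.congr fun x => ?_
    simp only [Function.comp]
    rw [one_div_mul_eq_div, Nat.floor_div_natCast, Nat.floor_natCast]
  have h4 := h1.mul h2
  rw [mul_one_div] at h4
  refine h4.congr' ?_
  filter_upwards [eventually_ge_atTop b] with x hx
  have : 0 < x / b := Nat.div_pos hx hb
  have h5 : ((x / b : ℕ) : ℝ) ≠ 0 := by positivity
  field_simp

lemma aux_non_pos {B : Set ℕ} (hB : auxEvap B) :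
    ∃ δ, 0 < δ ∧ HasDensity (auxNon B 2) δ := by
  obtain ⟨T, hT⟩ := hB (1 / 2) (by norm_num)
  have start : ∃ δ, 0 < δ ∧ HasDensity (auxNon B T) δ := by
    obtain ⟨δ, hδ⟩ := aux_non_density hB T
    refine ⟨δ, ?_, hδ⟩
    have : (1 / 2 : ℝ) ≤ δ := by
      refine ge_of_tendsto hδ ?_
      filter_upwards [hT, eventually_gt_atTop 0] with x hx hx0
      have hx' : (0 : ℝ) < x := by positivity
      rw [le_div_iff₀ hx']
      have a1 : countIn Set.univ x ≤ countIn (auxNon B T) x + countIn (auxMult B T) x := by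
        refine aux_countIn_le (fun n hn _ => ?_) x
        by_contra hcon
        push Not at hcon
        refine hcon.1 fun b hb hTb hd => hcon.2 ⟨hn, b, hb, hTb, hd⟩
      have a2 : countIn Set.univ x = x := by simp [countIn]
      rw [a2] at a1
      have a3 : (x : ℝ) ≤ countIn (auxNon B T) x + countIn (auxMult B T) x := by
        exact_mod_cast a1
      linarith
    linarith
  have step : ∀ t, 2 ≤ t → (∃ δ, 0 < δ ∧ HasDensity (auxNon B (t + 1)) δ) →
      ∃ δ, 0 < δ ∧ HasDensity (auxNon B t) δ := by
    rintro t ht ⟨δ, hδ0, hδ⟩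
    obtain ⟨δ', hδ'⟩ := aux_non_density hB t
    refine ⟨δ', ?_, hδ'⟩
    have ht0 : 0 < t := by omega
    have hlim : δ ≤ δ' + δ / t := by
      refine le_of_tendsto_of_tendsto hδ (hδ'.add (aux_dilate_tendsto hδ ht0)) ?_
      filter_upwards [eventually_gt_atTop 0] with x hx0
      have hx' : (0 : ℝ) < x := by positivity
      rw [← add_div]
      refine div_le_div_of_nonneg_right ?_ hx'.le
      have a1 : countIn (auxNon B (t + 1)) x ≤ countIn (auxNon B t) x +
          countIn {n | t ∣ n ∧ n ∈ auxNon B (t + 1)} x := by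
        refine aux_countIn_le (fun n hn hnX => ?_) x
        by_cases hd : t ∣ n
        · exact Or.inr ⟨hd, hnX⟩
        · left
          intro b hb htb hbn
          rcases eq_or_lt_of_le htb with h | h
          · subst h; exact hd hbn
          · exact hnX b hb h hbn
      have a2 : countIn {n | t ∣ n ∧ n ∈ auxNon B (t + 1)} x
          ≤ countIn (auxNon B (t + 1)) (x / t) := by
        classical
        unfold countIn
        refine Finset.card_le_card_of_injOn (fun k => k / t) ?_ ?_
        · intro k hk
          simp only [Finset.coe_filter, Finset.mem_Icc, Set.mem_setOf_eq] at hk ⊢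
          obtain ⟨⟨hk1, hk2⟩, hk3, hk4⟩ := hk
          refine ⟨⟨Nat.div_pos (Nat.le_of_dvd hk1 hk3) ht0, Nat.div_le_div_right hk2⟩, ?_⟩
          intro b hb htb hd
          exact hk4 b hb htb (hd.trans (Nat.div_dvd_of_dvd hk3))
        · intro p hp q hq hpq
          simp only [Finset.coe_filter, Finset.mem_Icc, Set.mem_setOf_eq] at hp hq hpq
          rw [← Nat.div_mul_cancel hp.2.1, ← Nat.div_mul_cancel hq.2.1, hpq]
      exact_mod_cast a1.trans (Nat.add_le_add_left a2 _)
    have ht2 : (2 : ℝ) ≤ t := by exact_mod_cast ht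
    have : δ / t ≤ δ / 2 := div_le_div_of_nonneg_left hδ0.le (by norm_num) ht2
    linarith
  -- reach a threshold at least two
  by_cases hT2 : 2 ≤ T
  · exact Nat.decreasingInduction' (P := fun t => ∃ δ, 0 < δ ∧ HasDensity (auxNon B t) δ)
      (fun k _ hk hs => step k hk hs) hT2 start
  · obtain ⟨δ, h0, hδ⟩ := start
    obtain ⟨δ', hδ'⟩ := aux_non_density hB 2
    refine ⟨δ', lt_of_lt_of_le h0 ?_, hδ'⟩
    refine le_of_tendsto_of_tendsto' hδ hδ' fun x => ?_
    refine div_le_div_of_nonneg_right ?_ (by positivity)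
    have := aux_countIn_le (X := auxNon B T) (Y := auxNon B 2) (E := ∅)
      (fun n hn hnX => Or.inl fun b hb h2 => hnX b hb (by omega)) x
    have he : countIn ∅ x = 0 := by simp [countIn]
    rw [he] at this
    exact_mod_cast this

/-- If `(f,g)` is a nonzero Möbius pair and `supp g` is evaporating, then `supp f`
has a positive asymptotic density. -/
theorem mobius_pair_evaporating_supp_g_density_supp_f (f g : ℕ → ℂ)
    (hfg : MobiusPair f g) (hne : ∃ n : ℕ, 0 < n ∧ (f n ≠ 0 ∨ g n ≠ 0))
    (hev : Evaporating {n : ℕ | g n ≠ 0}) :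
    ∃ δ : ℝ, 0 < δ ∧ HasDensity {n : ℕ | f n ≠ 0} δ := by
  classical
  have hA := aux_evap_of hev
  -- existence of the density
  have hex : ∃ δ, HasDensity {n : ℕ | f n ≠ 0} δ := by
    refine aux_approx fun ε hε => ?_
    obtain ⟨U, hU⟩ := hA ε hε
    refine ⟨{n : ℕ | ∑ d ∈ (Finset.Ico 1 U).filter (fun d => d ∣ n), g d ≠ 0},
      auxMult {n : ℕ | g n ≠ 0} U, ⟨U.factorial, U.factorial_pos, ?_⟩, ?_, hU⟩
    · intro n hn
      simp only [Set.mem_setOf_eq]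
      have : (Finset.Ico 1 U).filter (fun d => d ∣ n + U.factorial)
          = (Finset.Ico 1 U).filter (fun d => d ∣ n) := by
        refine Finset.filter_congr fun d hd => ?_
        rw [Finset.mem_Ico] at hd
        exact aux_dvd_add hd.1 hd.2
      rw [this]
    · intro n hn hnE
      simp only [Set.mem_setOf_eq]
      have : f n = ∑ d ∈ (Finset.Ico 1 U).filter (fun d => d ∣ n), g d := by
        rw [hfg n hn]
        symm
        refine Finset.sum_subset ?_ ?_
        · intro d hd
          simp only [Finset.mem_filter] at hd
          exact Nat.mem_divisors.2 ⟨hd.2, hn.ne'⟩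
        · intro d hd hd'
          by_contra hg
          have hdn := Nat.dvd_of_mem_divisors hd
          have hd0 := Nat.pos_of_dvd_of_pos hdn hn
          simp only [Finset.mem_filter, Finset.mem_Ico, not_and] at hd'
          refine hnE ⟨hn, d, hg, ?_, hdn⟩
          by_contra hlt
          exact hd' ⟨hd0, by omega⟩ hdn
      rw [this]
  -- the least element of the support of g
  have hg : ∃ m, 0 < m ∧ g m ≠ 0 := by
    obtain ⟨n, hn, h | h⟩ := hne
    · rw [hfg n hn] at h
      obtain ⟨d, hd, hgd⟩ := Finset.exists_ne_zero_of_sum_ne_zero h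
      exact ⟨d, Nat.pos_of_mem_divisors hd, hgd⟩
    · exact ⟨n, hn, h⟩
  obtain ⟨m, ⟨hm0, hgm⟩, hmin⟩ : ∃ m, (0 < m ∧ g m ≠ 0) ∧ ∀ d, d < m → ¬ (0 < d ∧ g d ≠ 0) :=
    ⟨Nat.find hg, Nat.find_spec hg, fun d hd => Nat.find_min hg hd⟩
  set B : Set ℕ := {b | ∃ a, m < a ∧ g a ≠ 0 ∧ b = a / Nat.gcd a m} with hBdef
  have hBdvd : ∀ a k : ℕ, a / Nat.gcd a m ∣ k ↔ a ∣ m * k := by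
    intro a k
    have hgpos : 0 < Nat.gcd a m := Nat.gcd_pos_of_pos_right _ hm0
    have hc : Nat.Coprime (a / Nat.gcd a m) (m / Nat.gcd a m) := Nat.coprime_div_gcd_div_gcd hgpos
    have ha : a = Nat.gcd a m * (a / Nat.gcd a m) := (Nat.mul_div_cancel' (Nat.gcd_dvd_left a m)).symm
    have hm : m = Nat.gcd a m * (m / Nat.gcd a m) := (Nat.mul_div_cancel' (Nat.gcd_dvd_right a m)).symm
    generalize Nat.gcd a m = c at *
    generalize a / c = a' at *
    generalize m / c = m' at *
    subst ha
    rw [hm, mul_assoc, Nat.mul_dvd_mul_iff_left hgpos]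
    exact hc.dvd_mul_left.symm
  have hB : auxEvap B := by
    intro ε hε
    have hm0' : (0 : ℝ) < m := by positivity
    obtain ⟨T, hT⟩ := hA (ε / m) (by positivity)
    refine ⟨T, ?_⟩
    have htend : Tendsto (fun x : ℕ => m * x) atTop atTop :=
      tendsto_id.const_mul_atTop' hm0
    filter_upwards [htend.eventually hT] with x hx
    have a1 : countIn (auxMult B T) x ≤ countIn (auxMult {n : ℕ | g n ≠ 0} T) (m * x) := by
      refine aux_countIn_dilate hm0 ?_ le_rfl
      rintro k hk ⟨_, b, ⟨a, hma, hga, rfl⟩, hTb, hd⟩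
      exact ⟨Nat.mul_pos hm0 hk, a, hga, hTb.trans (Nat.div_le_self _ _), (hBdvd a k).1 hd⟩
    have a2 : (countIn (auxMult B T) x : ℝ) ≤ countIn (auxMult {n : ℕ | g n ≠ 0} T) (m * x) := by
      exact_mod_cast a1
    refine a2.trans (hx.trans (le_of_eq ?_))
    push_cast
    field_simp
  obtain ⟨δ', hδ'0, hδ'⟩ := aux_non_pos hB
  obtain ⟨δ, hδ⟩ := hex
  refine ⟨δ, ?_, hδ⟩
  have hfin : δ' / m ≤ δ := by
    refine le_of_tendsto_of_tendsto' (aux_dilate_tendsto hδ' hm0) hδ fun x => ?_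
    refine div_le_div_of_nonneg_right ?_ (by positivity)
    have : countIn (auxNon B 2) (x / m) ≤ countIn {n : ℕ | f n ≠ 0} x := by
      refine aux_countIn_dilate hm0 ?_ (Nat.mul_div_le x m)
      intro k hk hkB
      have hmk : 0 < m * k := Nat.mul_pos hm0 hk
      have : f (m * k) = g m := by
        rw [hfg _ hmk]
        refine Finset.sum_eq_single m ?_ ?_
        · intro a ha ham
          by_contra hga
          have had := Nat.dvd_of_mem_divisors ha
          have ha0 := Nat.pos_of_mem_divisors ha
          have hma : m < a := by
            by_contra hlt
            exact hmin a (by omega) ⟨ha0, hga⟩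
          refine hkB (a / Nat.gcd a m) ⟨a, hma, hga, rfl⟩ ?_ ((hBdvd a k).2 had)
          have hgle : Nat.gcd a m ≤ m := Nat.gcd_le_right _ hm0
          have hmul : Nat.gcd a m * (a / Nat.gcd a m) = a := Nat.mul_div_cancel' (Nat.gcd_dvd_left a m)
          by_contra hlt
          have h1 : a / Nat.gcd a m ≤ 1 := by omega
          have := Nat.mul_le_mul_left (Nat.gcd a m) h1
          omega
        · intro h
          exact absurd (Nat.mem_divisors.2 ⟨dvd_mul_right m k, hmk.ne'⟩) h
      change f (m * k) ≠ 0
      rw [this]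
      exact hgm
    exact_mod_cast this
  have : 0 < δ' / m := by positivity
  linarith
end
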